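/- arXiv:1504.04954 — 2 statements merged into one kernel-verified Lean document; each statement's English description precedes it below -/
import Mathlib

section
/- Let N(·,·) ∈ X_{1,0}(Ω) ∩ X_{∞,0}(Ω) and let N be the integral operator (N f)(x) = ∫₀ˣ N(x,t) f(t) dt. Then for every p ∈ [1,∞], N is a Volterra operator on L^p[0,1]: it is a compact operator whose spectrum is {0}. -/
/-!
Write `K` for the kernel `N` extended by zero off the triangle. Schur's test (`schur_eLpNorm`)
bounds an integral operator on every `L^p`, `1 ≤ p ≤ ∞`, by the larger of the essential suprema of
its row integrals (the `X_∞` norm) and of its column integrals (the `X₁` norm); this gives the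
bounded operator `T`.

*Compactness.* Let `P` be averaging over the intervals `[i/n, (i+1)/n)`, a finite-rank operator.
The kernel of `(1 - P) T` is dominated by `oscKer n K`, the mean oscillation of `K` in `x` over
a cell. Averaging in `x` does not increase either mixed norm, and kernels constant in `x` on cells
have no oscillation, so row and column integrals of `oscKer n K` are at most twice those of
`K - S` for any such `S`. A continuous kernel on the triangle is close in both norms to its samples
at the grid points (`grid_approx`). Hence the rows are controlled by an approximation of `N` in
`X_∞`, the columns by a possibly different approximation in `X₁`, and `P T → T` in operator norm
(`compact_of_osc`).

*Spectrum.* By the Fredholm alternative a nonzero spectral value `l` of `T` would be an eigenvalue.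
Approximating by bounded kernels shows that the blocks of `K` on `(a, a+δ]²` have Schur bound
less than `|l|` for some `δ` independent of `a`. As `K` is triangular, an eigenfunction vanishing
on `[0, a]` satisfies the eigenvalue equation on `(a, a+δ]` with that block alone, so it vanishes on
`[0, a+δ]` too; finitely many steps give zero (`eigen_eq_zero`). The spectrum is nonempty, hence
equal to `{0}`.
-/

open MeasureTheory Set Complex Filter
open scoped ENNReal NNReal

noncomputable section

/-- Lebesgue measure restricted to `[0,1]`. -/
def μ01 : Measure ℝ := volume.restrict (Set.Icc (0:ℝ) 1)

/-- The triangle `Ω = {(x,t) : 0 ≤ t ≤ x ≤ 1}`. -/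
def Omega01 : Set (ℝ × ℝ) := {p | 0 ≤ p.2 ∧ p.2 ≤ p.1 ∧ p.1 ≤ 1}

/-- The `X₁(Ω)` norm: `esssup_{t∈[0,1]} ∫_t^1 |N(x,t)| dx`. -/
def normX1 (N : ℝ → ℝ → ℂ) : ℝ≥0∞ :=
  essSup (fun t => ∫⁻ x in Set.Icc t 1, (‖N x t‖₊ : ℝ≥0∞)) μ01

/-- The `X_∞(Ω)` norm: `esssup_{x∈[0,1]} ∫_0^x |N(x,t)| dt`. -/
def normXinf (N : ℝ → ℝ → ℂ) : ℝ≥0∞ :=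
  essSup (fun x => ∫⁻ t in Set.Icc (0:ℝ) x, (‖N x t‖₊ : ℝ≥0∞)) μ01

/-- Membership in `X_{1,0}(Ω)`, the closure of `C(Ω)` in `X₁(Ω)`. -/
def MemX10 (N : ℝ → ℝ → ℂ) : Prop :=
  Measurable (Function.uncurry N) ∧ normX1 N < ⊤ ∧
  ∀ ε : ℝ, 0 < ε → ∃ Nc : ℝ → ℝ → ℂ, ContinuousOn (Function.uncurry Nc) Omega01 ∧
    normX1 (fun x t => N x t - Nc x t) < ENNReal.ofReal ε

/-- Membership in `X_{∞,0}(Ω)`, the closure of `C(Ω)` in `X_∞(Ω)`. -/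
def MemXinf0 (N : ℝ → ℝ → ℂ) : Prop :=
  Measurable (Function.uncurry N) ∧ normXinf N < ⊤ ∧
  ∀ ε : ℝ, 0 < ε → ∃ Nc : ℝ → ℝ → ℂ, ContinuousOn (Function.uncurry Nc) Omega01 ∧
    normXinf (fun x t => N x t - Nc x t) < ENNReal.ofReal ε

/-! ### Schur's test and the associated operators -/

/-- The two-sided Schur bound: almost all row and column integrals of the nonnegative kernel `k`
are at most `C`. -/
def SchurLE (μ : Measure ℝ) (k : ℝ → ℝ → ℝ≥0∞) (C : ℝ≥0∞) : Prop :=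
  (∀ᵐ x ∂μ, ∫⁻ t, k x t ∂μ ≤ C) ∧ (∀ᵐ t ∂μ, ∫⁻ x, k x t ∂μ ≤ C)

/-- Schur's test, uniformly in `p ∈ [1,∞]`. -/
theorem schur_eLpNorm {μ : Measure ℝ} [IsFiniteMeasure μ] {k : ℝ → ℝ → ℝ≥0∞}
    (hk : Measurable (Function.uncurry k)) {C : ℝ≥0∞} (hS : SchurLE μ k C)
    {g : ℝ → ℝ≥0∞} (hg : Measurable g) {p : ℝ≥0∞} (hp : 1 ≤ p) :
    eLpNorm (fun x => ∫⁻ t, k x t * g t ∂μ) p μ ≤ C * eLpNorm g p μ := by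
  obtain ⟨hrow, hcol⟩ := hS
  by_cases hpt : p = ⊤
  · subst hpt
    simp only [eLpNorm_exponent_top]
    refine essSup_le_of_ae_le _ ?_
    filter_upwards [hrow] with x hx
    have hg' : ∀ᵐ t ∂μ, g t ≤ eLpNormEssSup g μ := by
      simpa using enorm_ae_le_eLpNormEssSup g μ
    calc ‖∫⁻ t, k x t * g t ∂μ‖ₑ = ∫⁻ t, k x t * g t ∂μ := enorm_eq_self _
      _ ≤ ∫⁻ t, k x t * eLpNormEssSup g μ ∂μ := by
        apply lintegral_mono_ae
        filter_upwards [hg'] with t ht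
        gcongr
      _ = (∫⁻ t, k x t ∂μ) * eLpNormEssSup g μ :=
        lintegral_mul_const _ (hk.comp measurable_prodMk_left)
      _ ≤ C * eLpNormEssSup g μ := by gcongr
  have hp0 : p ≠ 0 := (lt_of_lt_of_le one_pos hp).ne'
  have hr1 : 1 ≤ p.toReal := by
    simpa using (ENNReal.toReal_le_toReal (by simp) hpt).2 hp
  set r := p.toReal with hr
  have hr0 : 0 < r := by linarith
  rw [eLpNorm_eq_lintegral_rpow_enorm_toReal hp0 hpt,
    eLpNorm_eq_lintegral_rpow_enorm_toReal hp0 hpt, ← hr]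
  simp only [enorm_eq_self]
  have hkg : Measurable (Function.uncurry fun x t => k x t * g t ^ r) :=
    hk.mul ((hg.pow_const r).comp measurable_snd)
  -- Hölder for the measure `k x t dt`
  have hold : ∀ x, (∫⁻ t, k x t * g t ∂μ) ^ r
      ≤ (∫⁻ t, k x t ∂μ) ^ (r - 1) * ∫⁻ t, k x t * g t ^ r ∂μ := by
    intro x
    have hkx : Measurable (k x) := hk.comp measurable_prodMk_left
    have h := ENNReal.lintegral_mul_norm_pow_le (μ := μ)
      (f := fun t => k x t * g t ^ r) (g := k x) (p := 1 / r) (q := 1 - 1 / r)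
      (hkx.mul (hg.pow_const r)).aemeasurable hkx.aemeasurable (by positivity)
      (by rw [sub_nonneg, div_le_one hr0]; exact hr1) (by ring)
    have e : ∀ t, (k x t * g t ^ r) ^ (1 / r) * k x t ^ (1 - 1 / r) = k x t * g t := by
      intro t
      rw [ENNReal.mul_rpow_of_nonneg _ _ (by positivity), ← ENNReal.rpow_mul,
        mul_one_div_cancel hr0.ne', ENNReal.rpow_one, mul_right_comm,
        ← ENNReal.rpow_add_of_nonneg _ _ (by positivity)
          (by rw [sub_nonneg, div_le_one hr0]; exact hr1)]
      simp
    simp only [e] at h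
    calc (∫⁻ t, k x t * g t ∂μ) ^ r
        ≤ ((∫⁻ t, k x t * g t ^ r ∂μ) ^ (1 / r) * (∫⁻ t, k x t ∂μ) ^ (1 - 1 / r)) ^ r := by
          gcongr
      _ = _ := by
        rw [ENNReal.mul_rpow_of_nonneg _ _ hr0.le, ← ENNReal.rpow_mul, ← ENNReal.rpow_mul,
          one_div_mul_cancel hr0.ne', ENNReal.rpow_one, mul_comm]
        congr 2
        field_simp
  have main : ∫⁻ x, (∫⁻ t, k x t * g t ∂μ) ^ r ∂μ ≤ C ^ r * ∫⁻ t, g t ^ r ∂μ := by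
    calc ∫⁻ x, (∫⁻ t, k x t * g t ∂μ) ^ r ∂μ
        ≤ ∫⁻ x, C ^ (r - 1) * ∫⁻ t, k x t * g t ^ r ∂μ ∂μ := by
          apply lintegral_mono_ae
          filter_upwards [hrow] with x hx
          refine (hold x).trans ?_
          gcongr
      _ = C ^ (r - 1) * ∫⁻ x, ∫⁻ t, k x t * g t ^ r ∂μ ∂μ :=
          lintegral_const_mul _ hkg.lintegral_prod_right
      _ = C ^ (r - 1) * ∫⁻ t, ∫⁻ x, k x t * g t ^ r ∂μ ∂μ := by
          rw [lintegral_lintegral_swap hkg.aemeasurable]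
      _ ≤ C ^ (r - 1) * ∫⁻ t, C * g t ^ r ∂μ := by
          gcongr C ^ (r - 1) * ?_
          apply lintegral_mono_ae
          filter_upwards [hcol] with t ht
          have hkt : Measurable fun x => k x t := hk.comp measurable_prodMk_right
          rw [lintegral_mul_const _ hkt]
          gcongr
      _ = C ^ r * ∫⁻ t, g t ^ r ∂μ := by
          rw [lintegral_const_mul _ (hg.pow_const r), ← mul_assoc]
          congr 1
          nth_rw 2 [← ENNReal.rpow_one C]
          rw [← ENNReal.rpow_add_of_nonneg _ _ (by linarith) zero_le_one]
          simp
  calc (∫⁻ x, (∫⁻ t, k x t * g t ∂μ) ^ r ∂μ) ^ (1 / r)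
      ≤ (C ^ r * ∫⁻ t, g t ^ r ∂μ) ^ (1 / r) := by gcongr
    _ = _ := by
      rw [ENNReal.mul_rpow_of_nonneg _ _ (by positivity), ← ENNReal.rpow_mul,
        mul_one_div_cancel hr0.ne', ENNReal.rpow_one]

section Op

variable {μ : Measure ℝ} [IsFiniteMeasure μ] {p : ℝ≥0∞} [hp : Fact (1 ≤ p)]

/-- Domination form of Schur's test. -/
theorem schur_norm_le {k : ℝ → ℝ → ℝ≥0∞} (hk : Measurable (Function.uncurry k)) {C : ℝ≥0∞}
    (hS : SchurLE μ k C) {f : ℝ → ℂ} (hf : Measurable f) {F : ℝ → ℂ}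
    (hF : ∀ᵐ x ∂μ, ‖F x‖ₑ ≤ ∫⁻ t, k x t * ‖f t‖ₑ ∂μ) :
    eLpNorm F p μ ≤ C * eLpNorm f p μ := by
  calc eLpNorm F p μ ≤ eLpNorm (fun x => ∫⁻ t, k x t * ‖f t‖ₑ ∂μ) p μ :=
        eLpNorm_mono_enorm_ae (by simpa using hF)
    _ ≤ C * eLpNorm (fun t => ‖f t‖ₑ) p μ := schur_eLpNorm hk hS hf.enorm hp.out
    _ = C * eLpNorm f p μ := by rw [eLpNorm_enorm]

theorem schur_ae_integrable {K : ℝ → ℝ → ℂ} (hK : Measurable (Function.uncurry K)) {C : ℝ≥0∞}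
    (hC : C ≠ ⊤) (hS : SchurLE μ (fun x t => ‖K x t‖ₑ) C) {f : ℝ → ℂ} (hf : Measurable f)
    (hfp : MemLp f p μ) : ∀ᵐ x ∂μ, Integrable (fun t => K x t * f t) μ := by
  have hk : Measurable (Function.uncurry fun x t => ‖K x t‖ₑ) := hK.enorm
  have hm : Measurable fun x => ∫⁻ t, ‖K x t‖ₑ * ‖f t‖ₑ ∂μ :=
    Measurable.lintegral_prod_right (hk.mul (hf.enorm.comp measurable_snd))
  have h := schur_eLpNorm hk hS hf.enorm hp.out
  rw [eLpNorm_enorm] at h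
  have h1 : eLpNorm (fun x => ∫⁻ t, ‖K x t‖ₑ * ‖f t‖ₑ ∂μ) 1 μ < ⊤ := by
    refine lt_of_le_of_lt (eLpNorm_le_eLpNorm_mul_rpow_measure_univ hp.out
      hm.aestronglyMeasurable) ?_
    refine ENNReal.mul_lt_top (h.trans_lt (ENNReal.mul_lt_top hC.lt_top hfp.2)) ?_
    refine ENNReal.rpow_lt_top_of_nonneg ?_ (measure_ne_top _ _)
    by_cases hpt : p = ⊤
    · simp [hpt]
    · have := (ENNReal.toReal_le_toReal (by simp) hpt).2 hp.out
      simp only [ENNReal.toReal_one] at this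
      simp only [ENNReal.toReal_one, div_one, sub_nonneg]
      exact (div_le_one (by linarith)).2 this
  rw [eLpNorm_one_eq_lintegral_enorm] at h1
  simp only [enorm_eq_self] at h1
  filter_upwards [ae_lt_top hm h1.ne] with x hx
  refine ⟨((hK.comp measurable_prodMk_left).mul hf).aestronglyMeasurable, ?_⟩
  simpa [HasFiniteIntegral, enorm_mul] using hx

/-- A kernel satisfying a finite Schur bound defines a bounded operator on every `L^p`. -/
theorem exists_schur_op {K : ℝ → ℝ → ℂ} (hK : Measurable (Function.uncurry K)) {C : ℝ≥0∞}
    (hC : C ≠ ⊤) (hS : SchurLE μ (fun x t => ‖K x t‖ₑ) C) :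
    ∃ T : Lp ℂ p μ →L[ℂ] Lp ℂ p μ, ∀ f : Lp ℂ p μ,
      (T f : ℝ → ℂ) =ᵐ[μ] fun x => ∫ t, K x t * f t ∂μ := by
  have hmeas : ∀ f : Lp ℂ p μ, Measurable f := fun f => (Lp.stronglyMeasurable f).measurable
  have hbd : ∀ f : Lp ℂ p μ,
      eLpNorm (fun x => ∫ t, K x t * f t ∂μ) p μ ≤ C * eLpNorm f p μ := by
    intro f
    refine schur_norm_le (k := fun x t => ‖K x t‖ₑ) hK.enorm hS (hmeas f)
      (Eventually.of_forall fun x => ?_)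
    simpa [enorm_mul] using enorm_integral_le_lintegral_enorm (μ := μ) fun t => K x t * f t
  have hmem : ∀ f : Lp ℂ p μ, MemLp (fun x => ∫ t, K x t * f t ∂μ) p μ := by
    intro f
    refine ⟨?_, (hbd f).trans_lt (ENNReal.mul_lt_top hC.lt_top (Lp.memLp f).2)⟩
    have : Measurable (Function.uncurry fun x t => K x t * f t) :=
      hK.mul ((hmeas f).comp measurable_snd)
    exact (this.stronglyMeasurable.integral_prod_right (ν := μ)).aestronglyMeasurable
  have hint : ∀ f : Lp ℂ p μ, ∀ᵐ x ∂μ, Integrable (fun t => K x t * f t) μ := fun f =>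
    schur_ae_integrable hK hC hS (hmeas f) (Lp.memLp f)
  let T₀ : Lp ℂ p μ →ₗ[ℂ] Lp ℂ p μ :=
    { toFun := fun f => (hmem f).toLp _
      map_add' := by
        intro f g
        rw [← MemLp.toLp_add]
        refine MemLp.toLp_congr _ _ ?_
        filter_upwards [hint f, hint g] with x hf hg
        simp only [Pi.add_apply]
        rw [← integral_add hf hg]
        refine integral_congr_ae ?_
        filter_upwards [Lp.coeFn_add f g] with t ht
        rw [ht, Pi.add_apply, mul_add]
      map_smul' := by
        intro c f
        rw [RingHom.id_apply, ← MemLp.toLp_const_smul]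
        refine MemLp.toLp_congr _ _ (Eventually.of_forall fun x => ?_)
        simp only [Pi.smul_apply, smul_eq_mul]
        rw [← integral_const_mul]
        refine integral_congr_ae ?_
        filter_upwards [Lp.coeFn_smul c f] with t ht
        rw [ht, Pi.smul_apply, smul_eq_mul]
        ring }
  refine ⟨T₀.mkContinuous C.toReal fun f => ?_, fun f => ?_⟩
  · change ‖(hmem f).toLp _‖ ≤ _
    rw [Lp.norm_toLp, Lp.norm_def, ← ENNReal.toReal_mul]
    exact ENNReal.toReal_mono (ENNReal.mul_lt_top hC.lt_top (Lp.memLp f).2).ne (hbd f)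
  · exact (hmem f).coeFn_toLp

end Op

/-! ### Kernels on the triangle -/

instance : IsFiniteMeasure μ01 := by unfold μ01; infer_instance

theorem μ01_univ : μ01 univ = 1 := by simp [μ01]

theorem μ01_restrict {J : Set ℝ} (hJ : MeasurableSet J) (hJs : J ⊆ Icc 0 1) :
    μ01.restrict J = volume.restrict J := by
  rw [μ01, Measure.restrict_restrict hJ, inter_eq_left.2 hJs]

theorem ae_μ01_mem : ∀ᵐ x ∂μ01, x ∈ Icc (0:ℝ) 1 := by
  unfold μ01; exact ae_restrict_mem measurableSet_Icc

theorem ae_μ01_ne (c : ℝ) : ∀ᵐ x ∂μ01, x ≠ c := by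
  unfold μ01
  exact ae_restrict_of_ae (Measure.ae_ne volume c)

theorem ae_μ01_mem' : ∀ᵐ x ∂μ01, x ∈ Ico (0:ℝ) 1 := by
  filter_upwards [ae_μ01_mem, ae_μ01_ne 1] with x hx h1
  exact ⟨hx.1, lt_of_le_of_ne hx.2 h1⟩

theorem lintegral_strip_le {J : Set ℝ} (hJ : MeasurableSet J) {d : ℝ≥0∞} (hd : volume J ≤ d)
    (a b : ℝ≥0∞) : ∫⁻ t, (a + J.indicator (fun _ => b) t) ∂μ01 ≤ a + b * d := by
  rw [lintegral_add_left measurable_const, lintegral_const, μ01_univ, mul_one,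
    lintegral_indicator hJ, lintegral_const, Measure.restrict_apply_univ]
  gcongr
  exact (Measure.restrict_apply_le _ _).trans hd

/-- The kernel `N` on the triangle, extended by zero to the plane. -/
def triExt (N : ℝ → ℝ → ℂ) (x t : ℝ) : ℂ := Omega01.indicator (Function.uncurry N) (x, t)

theorem isClosed_Omega01 : IsClosed Omega01 := by
  have : Omega01 = {q : ℝ × ℝ | 0 ≤ q.2} ∩ ({q | q.2 ≤ q.1} ∩ {q | q.1 ≤ 1}) := by
    ext q; simp [Omega01]
  rw [this]
  exact (isClosed_le (by fun_prop) (by fun_prop)).inter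
    ((isClosed_le (by fun_prop) (by fun_prop)).inter (isClosed_le (by fun_prop) (by fun_prop)))

theorem isCompact_Omega01 : IsCompact Omega01 := by
  refine (isCompact_Icc (a := ((0:ℝ), (0:ℝ))) (b := (1, 1))).of_isClosed_subset
    isClosed_Omega01 ?_
  rintro ⟨x, t⟩ ⟨h0, h1, h2⟩
  simp only at h0 h1 h2
  exact ⟨⟨by simp only; linarith, h0⟩, ⟨h2, by simp only; linarith⟩⟩

theorem triExt_measurable {N : ℝ → ℝ → ℂ} (hN : Measurable (Function.uncurry N)) :
    Measurable (Function.uncurry (triExt N)) :=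
  hN.indicator isClosed_Omega01.measurableSet

theorem triExt_measurable_of_continuousOn {G : ℝ → ℝ → ℂ}
    (hG : ContinuousOn (Function.uncurry G) Omega01) :
    Measurable (Function.uncurry (triExt G)) := by
  classical
  have h := ContinuousOn.measurable_piecewise (g := 0) hG continuousOn_const
    isClosed_Omega01.measurableSet
  rwa [piecewise_eq_indicator] at h

theorem triExt_bounded {G : ℝ → ℝ → ℂ} (hG : ContinuousOn (Function.uncurry G) Omega01) :
    ∃ M : ℝ, 0 ≤ M ∧ ∀ x t, ‖triExt G x t‖ ≤ M := by
  obtain ⟨M, hM⟩ := isCompact_Omega01.exists_bound_of_continuousOn hG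
  refine ⟨max M 0, le_max_right _ _, fun x t => ?_⟩
  unfold triExt
  by_cases h : (x, t) ∈ Omega01
  · rw [indicator_of_mem h]; exact (hM _ h).trans (le_max_left _ _)
  · rw [indicator_of_notMem h]; simp

theorem triExt_of_lt {N : ℝ → ℝ → ℂ} {x t : ℝ} (h : x < t) : triExt N x t = 0 :=
  indicator_of_notMem (fun h' => absurd h'.2.1 (not_le.2 h)) _

theorem triExt_sub (N G : ℝ → ℝ → ℂ) (x t : ℝ) :
    triExt N x t - triExt G x t = triExt (fun x t => N x t - G x t) x t := by
  unfold triExt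
  by_cases h : (x, t) ∈ Omega01 <;> simp [h]

theorem triExt_row (H : ℝ → ℝ → ℂ) {x : ℝ} (hx : x ∈ Icc (0:ℝ) 1) :
    ∀ t, triExt H x t = (Icc 0 x).indicator (H x) t := by
  intro t
  by_cases ht : t ∈ Icc 0 x
  · rw [indicator_of_mem ht]
    exact indicator_of_mem (show (x, t) ∈ Omega01 from ⟨ht.1, ht.2, hx.2⟩) _
  · rw [indicator_of_notMem ht]
    exact indicator_of_notMem (fun h => ht ⟨h.1, h.2.1⟩) _

theorem triExt_col (H : ℝ → ℝ → ℂ) {t : ℝ} (ht : t ∈ Icc (0:ℝ) 1) :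
    ∀ x, triExt H x t = (Icc t 1).indicator (fun x => H x t) x := by
  intro x
  by_cases hx : x ∈ Icc t 1
  · rw [indicator_of_mem hx]
    exact indicator_of_mem (show (x, t) ∈ Omega01 from ⟨ht.1, hx.1, hx.2⟩) _
  · rw [indicator_of_notMem hx]
    exact indicator_of_notMem (fun h => hx ⟨h.2.1, h.2.2⟩) _

theorem lintegral_μ01_indicator {J : Set ℝ} (hJ : MeasurableSet J) (hJs : J ⊆ Icc 0 1)
    (g : ℝ → ℂ) : ∫⁻ t, ‖J.indicator g t‖ₑ ∂μ01 = ∫⁻ t in J, ‖g t‖ₑ := by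
  simp_rw [enorm_indicator_eq_indicator_enorm]
  rw [lintegral_indicator hJ, μ01_restrict hJ hJs]

theorem row_le_normXinf (H : ℝ → ℝ → ℂ) :
    ∀ᵐ x ∂μ01, ∫⁻ t, ‖triExt H x t‖ₑ ∂μ01 ≤ normXinf H := by
  filter_upwards [ae_μ01_mem, ENNReal.ae_le_essSup (μ := μ01)
    (fun x => ∫⁻ t in Set.Icc (0:ℝ) x, (‖H x t‖₊ : ℝ≥0∞))] with x hx h
  simp_rw [triExt_row H hx]
  rw [lintegral_μ01_indicator measurableSet_Icc (Icc_subset_Icc_right hx.2)]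
  exact h

theorem col_le_normX1 (H : ℝ → ℝ → ℂ) :
    ∀ᵐ t ∂μ01, ∫⁻ x, ‖triExt H x t‖ₑ ∂μ01 ≤ normX1 H := by
  filter_upwards [ae_μ01_mem, ENNReal.ae_le_essSup (μ := μ01)
    (fun t => ∫⁻ x in Set.Icc t 1, (‖H x t‖₊ : ℝ≥0∞))] with t ht h
  simp_rw [triExt_col H ht]
  rw [lintegral_μ01_indicator measurableSet_Icc (Icc_subset_Icc_left ht.1)]
  exact h

theorem MemXinf0.exists_approx {N : ℝ → ℝ → ℂ} (h : MemXinf0 N) {ε : ℝ} (hε : 0 < ε) :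
    ∃ G : ℝ → ℝ → ℂ, ContinuousOn (Function.uncurry G) Omega01 ∧
      ∀ᵐ x ∂μ01, ∫⁻ t, ‖triExt N x t - triExt G x t‖ₑ ∂μ01 ≤ ENNReal.ofReal ε := by
  obtain ⟨G, hG, hlt⟩ := h.2.2 ε hε
  refine ⟨G, hG, ?_⟩
  filter_upwards [row_le_normXinf fun x t => N x t - G x t] with x hx
  simp_rw [triExt_sub]
  exact hx.trans hlt.le

theorem MemX10.exists_approx {N : ℝ → ℝ → ℂ} (h : MemX10 N) {ε : ℝ} (hε : 0 < ε) :
    ∃ G : ℝ → ℝ → ℂ, ContinuousOn (Function.uncurry G) Omega01 ∧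
      ∀ᵐ t ∂μ01, ∫⁻ x, ‖triExt N x t - triExt G x t‖ₑ ∂μ01 ≤ ENNReal.ofReal ε := by
  obtain ⟨G, hG, hlt⟩ := h.2.2 ε hε
  refine ⟨G, hG, ?_⟩
  filter_upwards [col_le_normX1 fun x t => N x t - G x t] with x hx
  simp_rw [triExt_sub]
  exact hx.trans hlt.le

/-! ### Averaging over a uniform grid -/

/-- The left endpoint of the interval `[i/n, (i+1)/n)` containing `x`. -/
def gridPt (n : ℕ) (x : ℝ) : ℝ := (⌊(n:ℝ) * x⌋ : ℝ) / n

/-- The kernel of the averaging projection onto functions constant on each `[i/n, (i+1)/n)`. -/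
def avgKer (n : ℕ) (x y : ℝ) : ℂ := if ⌊(n:ℝ) * x⌋ = ⌊(n:ℝ) * y⌋ then (n : ℂ) else 0

theorem measurable_gridPt (n : ℕ) : Measurable (gridPt n) := by
  unfold gridPt
  have : Measurable fun x : ℝ => ⌊(n:ℝ) * x⌋ := (measurable_const_mul _).floor
  exact ((measurable_from_top (f := fun i : ℤ => (i : ℝ))).comp this).div_const _

theorem measurable_avgKer (n : ℕ) : Measurable (Function.uncurry (avgKer n)) := by
  have : Measurable fun x : ℝ => ⌊(n:ℝ) * x⌋ := (measurable_const_mul _).floor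
  exact Measurable.ite (measurableSet_eq_fun (this.comp measurable_fst)
    (this.comp measurable_snd)) measurable_const measurable_const

theorem avgKer_comm (n : ℕ) (x y : ℝ) : avgKer n x y = avgKer n y x := by
  simp only [avgKer, eq_comm]

theorem gridPt_eq_of_avgKer {n : ℕ} {x y : ℝ} (h : avgKer n x y ≠ 0) :
    gridPt n x = gridPt n y := by
  unfold avgKer at h
  split_ifs at h with h'
  · simp [gridPt, h']
  · simp at h

theorem μ01_cell {n : ℕ} (hn : 0 < n) {x : ℝ} (hx : x ∈ Ico (0:ℝ) 1) :
    μ01 {y | ⌊(n:ℝ) * x⌋ = ⌊(n:ℝ) * y⌋} = ENNReal.ofReal (1 / n) := by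
  have hn' : (0:ℝ) < n := by exact_mod_cast hn
  set i := ⌊(n:ℝ) * x⌋ with hi
  have hi0 : 0 ≤ i := Int.floor_nonneg.2 (mul_nonneg hn'.le hx.1)
  have hin : i + 1 ≤ n := by
    have : i < n := Int.floor_lt.2 (by
      have := mul_lt_mul_of_pos_left hx.2 hn'
      simpa using this)
    omega
  have hset : {y : ℝ | i = ⌊(n:ℝ) * y⌋} = Ico ((i:ℝ) / n) ((i + 1) / n) := by
    ext y
    rw [mem_ofPred_eq, eq_comm, Int.floor_eq_iff, mem_Ico, div_le_iff₀ hn', lt_div_iff₀ hn',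
      mul_comm y]
  have hsub : Ico ((i:ℝ) / n) ((i + 1) / n) ⊆ Icc 0 1 := by
    intro y hy
    have h1 : (0:ℝ) ≤ (i:ℝ) / n := div_nonneg (by exact_mod_cast hi0) hn'.le
    have h2 : ((i:ℝ) + 1) / n ≤ 1 := (div_le_one hn').2 (by exact_mod_cast hin)
    exact ⟨h1.trans hy.1, hy.2.le.trans h2⟩
  rw [hset, μ01, Measure.restrict_apply measurableSet_Ico, inter_eq_left.2 hsub, Real.volume_Ico]
  congr 1
  ring

theorem measurableSet_cell (n : ℕ) (i : ℤ) : MeasurableSet {y : ℝ | i = ⌊(n:ℝ) * y⌋} := by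
  have : Measurable fun x : ℝ => ⌊(n:ℝ) * x⌋ := (measurable_const_mul _).floor
  exact measurableSet_eq_fun measurable_const this

theorem lintegral_avgKer {n : ℕ} (hn : 0 < n) {x : ℝ} (hx : x ∈ Ico (0:ℝ) 1) :
    ∫⁻ y, ‖avgKer n x y‖ₑ ∂μ01 = 1 := by
  have hn' : (0:ℝ) < n := by exact_mod_cast hn
  have e : ∀ y, ‖avgKer n x y‖ₑ
      = {y | ⌊(n:ℝ) * x⌋ = ⌊(n:ℝ) * y⌋}.indicator (fun _ => (n : ℝ≥0∞)) y := by
    intro y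
    unfold avgKer
    split_ifs with h <;> simp [h, enorm_eq_nnnorm]
  simp_rw [e]
  rw [lintegral_indicator (measurableSet_cell n _), lintegral_const, Measure.restrict_apply_univ,
    μ01_cell hn hx, ← ENNReal.ofReal_natCast, ← ENNReal.ofReal_mul hn'.le,
    mul_one_div_cancel hn'.ne', ENNReal.ofReal_one]

theorem integral_avgKer {n : ℕ} (hn : 0 < n) {x : ℝ} (hx : x ∈ Ico (0:ℝ) 1) :
    ∫ y, avgKer n x y ∂μ01 = 1 := by
  have hn' : (0:ℝ) < n := by exact_mod_cast hn
  have e : ∀ y, avgKer n x y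
      = {y | ⌊(n:ℝ) * x⌋ = ⌊(n:ℝ) * y⌋}.indicator (fun _ => (n : ℂ)) y := by
    intro y
    unfold avgKer
    split_ifs with h <;> simp [h]
  simp_rw [e]
  rw [integral_indicator_const _ (measurableSet_cell n _), Measure.real, μ01_cell hn hx,
    ENNReal.toReal_ofReal (by positivity)]
  simp [hn.ne']

theorem avgKer_schur {n : ℕ} (hn : 0 < n) : SchurLE μ01 (fun x y => ‖avgKer n x y‖ₑ) 1 := by
  constructor
  · filter_upwards [ae_μ01_mem'] with x hx using (lintegral_avgKer hn hx).le
  · filter_upwards [ae_μ01_mem'] with x hx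
    simp_rw [fun y => avgKer_comm n y x]
    exact (lintegral_avgKer hn hx).le

/-- A continuous kernel on the triangle is approximated, in both mixed norms, by its samples at
the grid points; the jump across the diagonal only affects a strip of width `1/n`. -/
theorem grid_approx {G : ℝ → ℝ → ℂ} (hG : ContinuousOn (Function.uncurry G) Omega01) {ε : ℝ}
    (hε : 0 < ε) : ∃ n₀ : ℕ, ∀ n ≥ n₀, 0 < n →
      (∀ x ∈ Icc (0:ℝ) 1,
        ∫⁻ t, ‖triExt G x t - triExt G (gridPt n x) t‖ₑ ∂μ01 ≤ ENNReal.ofReal ε) ∧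
      (∀ t ∈ Icc (0:ℝ) 1,
        ∫⁻ x, ‖triExt G x t - triExt G (gridPt n x) t‖ₑ ∂μ01 ≤ ENNReal.ofReal ε) := by
  obtain ⟨M, hM0, hM⟩ := triExt_bounded hG
  have huc := isCompact_Omega01.uniformContinuousOn_of_continuous hG
  rw [Metric.uniformContinuousOn_iff] at huc
  obtain ⟨δ, hδ, huc⟩ := huc (ε / 2) (by positivity)
  obtain ⟨n₁, hn₁⟩ := exists_nat_gt (1 / δ)
  obtain ⟨n₂, hn₂⟩ := exists_nat_gt (2 * M / ε)
  refine ⟨max n₁ n₂, fun n hn hn0 => ?_⟩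
  have hn' : (0:ℝ) < n := by exact_mod_cast hn0
  have hnδ : 1 / (n:ℝ) < δ := by
    have : (n₁:ℝ) ≤ n := by exact_mod_cast (le_max_left _ _).trans hn
    rw [one_div_lt hn' hδ]; linarith
  have hnM : M * (1 / n) ≤ ε / 2 := by
    have : (n₂:ℝ) ≤ n := by exact_mod_cast (le_max_right _ _).trans hn
    have h2 : 2 * M / ε < n := by linarith
    rw [div_lt_iff₀ hε] at h2
    rw [mul_one_div, div_le_iff₀ hn']
    linarith
  have hg1 : ∀ x, gridPt n x ≤ x := fun x => by
    unfold gridPt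
    rw [div_le_iff₀ hn', mul_comm]
    exact Int.floor_le _
  have hg2 : ∀ x, x < gridPt n x + 1 / n := fun x => by
    unfold gridPt
    rw [← add_div, lt_div_iff₀ hn', mul_comm]
    exact Int.lt_floor_add_one _
  -- Across a cell the sampled kernel differs by `ε / 2`, except where `t` lies between the
  -- grid point and `x`: there the sample vanishes, and `x < t + 1 / n`.
  have key : ∀ x ∈ Icc (0:ℝ) 1, ∀ t ∈ Icc (0:ℝ) 1,
      ‖triExt G x t - triExt G (gridPt n x) t‖ₑ ≤ ENNReal.ofReal (ε / 2)
        + if t ≤ x ∧ x < t + 1 / n then ENNReal.ofReal M else 0 := by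
    intro x hx t ht
    rw [← ofReal_norm]
    rcases le_or_gt t (gridPt n x) with h | h
    · refine le_add_right (ENNReal.ofReal_le_ofReal ?_)
      have m1 : (x, t) ∈ Omega01 := ⟨ht.1, h.trans (hg1 x), hx.2⟩
      have m2 : (gridPt n x, t) ∈ Omega01 := ⟨ht.1, h, (hg1 x).trans hx.2⟩
      unfold triExt
      rw [indicator_of_mem m1, indicator_of_mem m2, ← dist_eq_norm]
      refine (huc _ m1 _ m2 ?_).le
      rw [Prod.dist_eq, dist_self, Real.dist_eq, max_lt_iff]
      refine ⟨?_, hδ⟩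
      rw [abs_of_nonneg (sub_nonneg.2 (hg1 x))]
      linarith [hg2 x]
    · rw [triExt_of_lt h, sub_zero]
      rcases le_or_gt t x with h' | h'
      · rw [if_pos ⟨h', by linarith [hg2 x]⟩]
        exact le_add_left (ENNReal.ofReal_le_ofReal (hM x t))
      · rw [triExt_of_lt h']; simp
  have hsum : ENNReal.ofReal (ε / 2) + ENNReal.ofReal M * ENNReal.ofReal (1 / n)
      ≤ ENNReal.ofReal ε := by
    rw [← ENNReal.ofReal_mul hM0, ← ENNReal.ofReal_add (by positivity) (by positivity)]
    exact ENNReal.ofReal_le_ofReal (by linarith)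
  constructor
  · intro x hx
    refine le_trans (lintegral_mono_ae ?_) ((lintegral_strip_le (J := Ioc (x - 1 / n) x)
      measurableSet_Ioc (d := ENNReal.ofReal (1 / n)) (by simp) _ _).trans hsum)
    filter_upwards [ae_μ01_mem] with t ht
    refine (key x hx t ht).trans ?_
    gcongr
    rw [indicator_apply]
    exact le_of_eq (if_congr (by rw [mem_Ioc, sub_lt_iff_lt_add, and_comm]) rfl rfl)
  · intro t ht
    refine le_trans (lintegral_mono_ae ?_) ((lintegral_strip_le (J := Ico t (t + 1 / n))
      measurableSet_Ico (d := ENNReal.ofReal (1 / n)) (by simp) _ _).trans hsum)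
    filter_upwards [ae_μ01_mem] with x hx
    refine (key x hx t ht).trans ?_
    rw [indicator_apply]
    exact le_of_eq (congrArg _ (if_congr Iff.rfl rfl rfl))

/-! ### Compactness -/

/-- The kernel dominating `(1 - P) T`, where `P` averages over the cells of the grid of mesh
`1/n` and `T` has kernel `K`. -/
def oscKer (n : ℕ) (K : ℝ → ℝ → ℂ) (x t : ℝ) : ℝ≥0∞ :=
  ∫⁻ y, ‖avgKer n x y‖ₑ * ‖K x t - K y t‖ₑ ∂μ01

theorem measurable_osc_integrand (n : ℕ) {K : ℝ → ℝ → ℂ} (hK : Measurable (Function.uncurry K)) :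
    Measurable fun q : (ℝ × ℝ) × ℝ =>
      ‖avgKer n q.1.1 q.2‖ₑ * ‖K q.1.1 q.1.2 - K q.2 q.1.2‖ₑ := by
  have h1 : Measurable fun q : (ℝ × ℝ) × ℝ => avgKer n q.1.1 q.2 :=
    (measurable_avgKer n).comp ((measurable_fst.comp measurable_fst).prodMk measurable_snd)
  have h2 : Measurable fun q : (ℝ × ℝ) × ℝ => K q.1.1 q.1.2 := hK.comp measurable_fst
  have h3 : Measurable fun q : (ℝ × ℝ) × ℝ => K q.2 q.1.2 :=
    hK.comp (measurable_snd.prodMk (measurable_snd.comp measurable_fst))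
  exact h1.enorm.mul (h2.sub h3).enorm

theorem measurable_oscKer (n : ℕ) {K : ℝ → ℝ → ℂ} (hK : Measurable (Function.uncurry K)) :
    Measurable (Function.uncurry (oscKer n K)) :=
  (measurable_osc_integrand n hK).lintegral_prod_right'

/-- Any kernel `S (gridPt n x) t` is constant in `x` on cells, hence unchanged by averaging, so
only the difference between `K` and it contributes to `oscKer`. -/
theorem oscKer_le {n : ℕ} (hn : 0 < n) {K S : ℝ → ℝ → ℂ} {x t : ℝ} (hx : x ∈ Ico (0:ℝ) 1) :
    oscKer n K x t ≤ ‖K x t - S (gridPt n x) t‖ₑ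
      + ∫⁻ y, ‖avgKer n x y‖ₑ * ‖K y t - S (gridPt n y) t‖ₑ ∂μ01 := by
  have hq : Measurable fun y => ‖avgKer n x y‖ₑ :=
    ((measurable_avgKer n).comp measurable_prodMk_left).enorm
  calc oscKer n K x t
      ≤ ∫⁻ y, (‖avgKer n x y‖ₑ * ‖K x t - S (gridPt n x) t‖ₑ
        + ‖avgKer n x y‖ₑ * ‖K y t - S (gridPt n y) t‖ₑ) ∂μ01 := by
        refine lintegral_mono fun y => ?_
        by_cases h : avgKer n x y = 0
        · simp [h]
        rw [← mul_add]
        gcongr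
        have e : K x t - K y t
            = (K x t - S (gridPt n x) t) - (K y t - S (gridPt n y) t) := by
          rw [gridPt_eq_of_avgKer h]; ring
        rw [e]
        exact enorm_sub_le
    _ = _ := by
      rw [lintegral_add_left (hq.mul_const _), lintegral_mul_const _ hq,
        lintegral_avgKer hn hx, one_mul]

theorem oscKer_row {n : ℕ} (hn : 0 < n) {K S : ℝ → ℝ → ℂ}
    (hK : Measurable (Function.uncurry K)) (hS : Measurable (Function.uncurry S)) {c : ℝ≥0∞}
    (h : ∀ᵐ x ∂μ01, ∫⁻ t, ‖K x t - S (gridPt n x) t‖ₑ ∂μ01 ≤ c) :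
    ∀ᵐ x ∂μ01, ∫⁻ t, oscKer n K x t ∂μ01 ≤ c + c := by
  have hD : Measurable fun q : ℝ × ℝ => ‖K q.1 q.2 - S (gridPt n q.1) q.2‖ₑ :=
    (hK.sub (hS.comp (((measurable_gridPt n).comp measurable_fst).prodMk
      measurable_snd))).enorm
  filter_upwards [h, ae_μ01_mem'] with x hx hx1
  have hq : Measurable fun y => ‖avgKer n x y‖ₑ :=
    ((measurable_avgKer n).comp measurable_prodMk_left).enorm
  have hDx : Measurable fun t => ‖K x t - S (gridPt n x) t‖ₑ := hD.comp measurable_prodMk_left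
  calc ∫⁻ t, oscKer n K x t ∂μ01
      ≤ ∫⁻ t, (‖K x t - S (gridPt n x) t‖ₑ
        + ∫⁻ y, ‖avgKer n x y‖ₑ * ‖K y t - S (gridPt n y) t‖ₑ ∂μ01) ∂μ01 :=
        lintegral_mono fun t => oscKer_le hn hx1
    _ = ∫⁻ t, ‖K x t - S (gridPt n x) t‖ₑ ∂μ01
        + ∫⁻ y, ∫⁻ t, ‖avgKer n x y‖ₑ * ‖K y t - S (gridPt n y) t‖ₑ ∂μ01 ∂μ01 := by
        rw [lintegral_add_left hDx, lintegral_lintegral_swap]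
        exact ((hq.comp measurable_snd).mul (hD.comp measurable_swap)).aemeasurable
    _ ≤ c + ∫⁻ y, ‖avgKer n x y‖ₑ * c ∂μ01 := by
        gcongr ?_ + ?_
        refine lintegral_mono_ae ?_
        filter_upwards [h] with y hy
        have hDy : Measurable fun t => ‖K y t - S (gridPt n y) t‖ₑ :=
          hD.comp measurable_prodMk_left
        rw [lintegral_const_mul _ hDy]
        gcongr
    _ = c + c := by rw [lintegral_mul_const _ hq, lintegral_avgKer hn hx1, one_mul]

theorem oscKer_col {n : ℕ} (hn : 0 < n) {K S : ℝ → ℝ → ℂ}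
    (hK : Measurable (Function.uncurry K)) (hS : Measurable (Function.uncurry S)) {c : ℝ≥0∞}
    (h : ∀ᵐ t ∂μ01, ∫⁻ x, ‖K x t - S (gridPt n x) t‖ₑ ∂μ01 ≤ c) :
    ∀ᵐ t ∂μ01, ∫⁻ x, oscKer n K x t ∂μ01 ≤ c + c := by
  have hD : Measurable fun q : ℝ × ℝ => ‖K q.1 q.2 - S (gridPt n q.1) q.2‖ₑ :=
    (hK.sub (hS.comp (((measurable_gridPt n).comp measurable_fst).prodMk
      measurable_snd))).enorm
  filter_upwards [h] with t ht
  have hq : Measurable fun q : ℝ × ℝ => ‖avgKer n q.1 q.2‖ₑ := (measurable_avgKer n).enorm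
  have hDt : Measurable fun x => ‖K x t - S (gridPt n x) t‖ₑ := hD.comp measurable_prodMk_right
  calc ∫⁻ x, oscKer n K x t ∂μ01
      ≤ ∫⁻ x, (‖K x t - S (gridPt n x) t‖ₑ
        + ∫⁻ y, ‖avgKer n x y‖ₑ * ‖K y t - S (gridPt n y) t‖ₑ ∂μ01) ∂μ01 := by
        refine lintegral_mono_ae ?_
        filter_upwards [ae_μ01_mem'] with x hx1 using oscKer_le hn hx1
    _ = ∫⁻ x, ‖K x t - S (gridPt n x) t‖ₑ ∂μ01
        + ∫⁻ y, ∫⁻ x, ‖avgKer n x y‖ₑ * ‖K y t - S (gridPt n y) t‖ₑ ∂μ01 ∂μ01 := by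
        rw [lintegral_add_left hDt, lintegral_lintegral_swap]
        exact (hq.mul (hDt.comp measurable_snd)).aemeasurable
    _ ≤ c + ∫⁻ y, ‖K y t - S (gridPt n y) t‖ₑ ∂μ01 := by
        gcongr ?_ + ?_
        refine lintegral_mono_ae ?_
        filter_upwards [(avgKer_schur hn).2] with y hy
        have hqy : Measurable fun x => ‖avgKer n x y‖ₑ := hq.comp measurable_prodMk_right
        rw [lintegral_mul_const _ hqy]
        exact mul_le_of_le_one_left' hy
    _ ≤ c + c := by gcongr

theorem enorm_sub_le_add_mid (a b c : ℂ) : ‖a - c‖ₑ ≤ ‖a - b‖ₑ + ‖b - c‖ₑ := by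
  have : a - c = (a - b) + (b - c) := by ring
  rw [this]
  exact enorm_add_le _ _

/-- The row bound uses an approximant of `N` in `X_∞` and the column bound an approximant in `X₁`;
the two need not coincide, since `oscKer` depends on `N` alone. -/
theorem exists_oscKer_schur {N : ℝ → ℝ → ℂ} (h1 : MemX10 N) (hinf : MemXinf0 N) {ε : ℝ}
    (hε : 0 < ε) : ∃ n : ℕ, 0 < n ∧
      SchurLE μ01 (oscKer n (triExt N)) (ENNReal.ofReal ε) := by
  have hK := triExt_measurable h1.1
  have hε4 : 0 < ε / 4 := by positivity
  obtain ⟨G, hG, hGa⟩ := h1.exists_approx hε4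
  obtain ⟨H, hH, hHa⟩ := hinf.exists_approx hε4
  obtain ⟨n₁, hn₁⟩ := grid_approx hG hε4
  obtain ⟨n₂, hn₂⟩ := grid_approx hH hε4
  set n := max n₁ n₂ + 1
  have hn : 0 < n := Nat.succ_pos _
  have g1 := (hn₁ n (by omega) hn).2
  have g2 := (hn₂ n (by omega) hn).1
  have hsum : ENNReal.ofReal (ε / 4) + ENNReal.ofReal (ε / 4)
      + (ENNReal.ofReal (ε / 4) + ENNReal.ofReal (ε / 4)) = ENNReal.ofReal ε := by
    rw [← ENNReal.ofReal_add hε4.le hε4.le,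
      ← ENNReal.ofReal_add (by positivity) (by positivity)]
    congr 1; ring
  have hGm := triExt_measurable_of_continuousOn hG
  have hHm := triExt_measurable_of_continuousOn hH
  refine ⟨n, hn, ?_, ?_⟩
  · rw [← hsum]
    refine oscKer_row hn hK hHm ?_
    filter_upwards [hHa, ae_μ01_mem] with x hx hx1
    have hm : Measurable fun t => ‖triExt N x t - triExt H x t‖ₑ :=
      ((hK.comp measurable_prodMk_left).sub (hHm.comp measurable_prodMk_left)).enorm
    refine (lintegral_mono fun t => enorm_sub_le_add_mid _ (triExt H x t) _).trans ?_
    rw [lintegral_add_left hm]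
    exact add_le_add hx (g2 x hx1)
  · rw [← hsum]
    refine oscKer_col hn hK hGm ?_
    filter_upwards [hGa, ae_μ01_mem] with t ht ht1
    have hm : Measurable fun x => ‖triExt N x t - triExt G x t‖ₑ :=
      ((hK.comp measurable_prodMk_right).sub (hGm.comp measurable_prodMk_right)).enorm
    refine (lintegral_mono fun x => enorm_sub_le_add_mid _ (triExt G x t) _).trans ?_
    rw [lintegral_add_left hm]
    exact add_le_add ht (g1 t ht1)

section Compact

variable {p : ℝ≥0∞} [hp : Fact (1 ≤ p)]

theorem integrable_coe (f : Lp ℂ p μ01) : Integrable f μ01 :=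
  (Lp.memLp f).integrable hp.out

/-- The averaging projection has finite rank. -/
theorem avg_compact (n : ℕ) {P : Lp ℂ p μ01 →L[ℂ] Lp ℂ p μ01}
    (hP : ∀ f : Lp ℂ p μ01, (P f : ℝ → ℂ) =ᵐ[μ01] fun x => ∫ t, avgKer n x t * f t ∂μ01) :
    IsCompactOperator P := by
  have hfl : Measurable fun x : ℝ => ⌊(n:ℝ) * x⌋₊ := (measurable_const_mul _).nat_floor
  -- the step function with prescribed values on the cells; cell `n` is the single point `1`
  let φ : (Fin (n + 1) → ℂ) → ℝ → ℂ := fun c x => c (Fin.ofNat (n + 1) ⌊(n:ℝ) * x⌋₊)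
  have hφ : ∀ c, MemLp (φ c) p μ01 := by
    intro c
    have hm : Measurable (φ c) :=
      (measurable_from_top (f := fun m : ℕ => c (Fin.ofNat (n + 1) m))).comp hfl
    refine MemLp.of_bound hm.aestronglyMeasurable ‖c‖ (Eventually.of_forall fun x => ?_)
    exact norm_le_pi_norm c _
  let A : (Fin (n + 1) → ℂ) →ₗ[ℂ] Lp ℂ p μ01 :=
    { toFun := fun c => (hφ c).toLp _
      map_add' := fun c d => by rw [← MemLp.toLp_add]; rfl
      map_smul' := fun a c => by rw [RingHom.id_apply, ← MemLp.toLp_const_smul]; rfl }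
  have hmem : ∀ f, P f ∈ LinearMap.range A := by
    intro f
    let c : Fin (n + 1) → ℂ := fun i =>
      ∫ t, (if ((i : ℕ) : ℤ) = ⌊(n:ℝ) * t⌋ then (n : ℂ) else 0) * f t ∂μ01
    refine ⟨c, Lp.ext ((hφ c).coeFn_toLp.trans ?_)⟩
    filter_upwards [hP f, ae_μ01_mem] with x hx hx1
    rw [hx]
    have h0 : 0 ≤ (n:ℝ) * x := mul_nonneg (by positivity) hx1.1
    have hlt : ⌊(n:ℝ) * x⌋₊ < n + 1 := by
      refine (Nat.floor_lt h0).2 ?_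
      have := mul_le_mul_of_nonneg_left hx1.2 (Nat.cast_nonneg (α := ℝ) n)
      push_cast
      linarith
    have e : (((Fin.ofNat (n + 1) ⌊(n:ℝ) * x⌋₊ : Fin (n + 1)) : ℕ) : ℤ) = ⌊(n:ℝ) * x⌋ := by
      rw [Fin.val_ofNat, Nat.mod_eq_of_lt hlt]
      exact Int.natCast_floor_eq_floor h0
    simp only [φ, c, e, avgKer]
  have hfd : FiniteDimensional ℂ (LinearMap.range A) := inferInstance
  have : ProperSpace (LinearMap.range A) := FiniteDimensional.proper ℂ _
  have hc := isCompactOperator_of_locallyCompactSpace_dom (P.codRestrict (LinearMap.range A) hmem)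
  exact hc.clm_comp (LinearMap.range A).subtypeL

/-- Averaging the values of `T` over cells gives finite-rank operators converging to `T` in norm,
because `oscKer` dominates the kernel of the difference. -/
theorem compact_of_osc {K : ℝ → ℝ → ℂ} (hK : Measurable (Function.uncurry K)) {C : ℝ≥0∞}
    (hC : C ≠ ⊤) (hS : SchurLE μ01 (fun x t => ‖K x t‖ₑ) C)
    (hosc : ∀ ε : ℝ, 0 < ε → ∃ n : ℕ, 0 < n ∧ SchurLE μ01 (oscKer n K) (ENNReal.ofReal ε))
    {T : Lp ℂ p μ01 →L[ℂ] Lp ℂ p μ01}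
    (hT : ∀ f : Lp ℂ p μ01, (T f : ℝ → ℂ) =ᵐ[μ01] fun x => ∫ t, K x t * f t ∂μ01) :
    IsCompactOperator T := by
  have hcl : T ∈ closure {S : Lp ℂ p μ01 →L[ℂ] Lp ℂ p μ01 | IsCompactOperator S} := by
    rw [Metric.mem_closure_iff]
    intro ε hε
    obtain ⟨n, hn, hn'⟩ := hosc (ε / 2) (by positivity)
    obtain ⟨P, hP⟩ := exists_schur_op (p := p) (measurable_avgKer n) ENNReal.one_ne_top
      (avgKer_schur hn)
    refine ⟨P.comp T, (avg_compact n hP).comp_clm T, ?_⟩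
    rw [dist_eq_norm]
    refine lt_of_le_of_lt (ContinuousLinearMap.opNorm_le_bound _ (by positivity) fun f => ?_)
      (half_lt_self hε)
    have hfm : Measurable f := (Lp.stronglyMeasurable f).measurable
    have hint := schur_ae_integrable hK hC hS hfm (Lp.memLp f)
    have hdom : ∀ᵐ x ∂μ01,
        ‖(T f - P (T f) : Lp ℂ p μ01) x‖ₑ ≤ ∫⁻ t, oscKer n K x t * ‖f t‖ₑ ∂μ01 := by
      filter_upwards [Lp.coeFn_sub (T f) (P (T f)), hP (T f), hT f, hint, ae_μ01_mem']
        with x h1 h2 h3 h4 h5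
      have hqm : Measurable fun y => avgKer n x y :=
        (measurable_avgKer n).comp measurable_prodMk_left
      have hqi : Integrable (fun y => avgKer n x y) μ01 :=
        ⟨hqm.aestronglyMeasurable, by
          rw [HasFiniteIntegral, lintegral_avgKer hn h5]; exact ENNReal.one_lt_top⟩
      have hqT : Integrable (fun y => avgKer n x y * T f y) μ01 := by
        refine (integrable_coe (T f)).bdd_mul hqm.aestronglyMeasurable (c := n)
          (Eventually.of_forall fun y => ?_)
        unfold avgKer
        split_ifs <;> simp
      have e : (T f - P (T f) : Lp ℂ p μ01) x
          = ∫ y, avgKer n x y * (T f x - T f y) ∂μ01 := by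
        simp_rw [mul_sub]
        rw [integral_sub (hqi.mul_const _) hqT, integral_mul_const, integral_avgKer hn h5,
          one_mul, h1, Pi.sub_apply, h2]
      have hm3 : Measurable fun q : ℝ × ℝ =>
          ‖avgKer n x q.1‖ₑ * ‖K x q.2 - K q.1 q.2‖ₑ * ‖f q.2‖ₑ := by
        have := (measurable_osc_integrand n hK).comp
          ((measurable_const (a := x)).prodMk (measurable_snd (α := ℝ) (β := ℝ)) |>.prodMk
            measurable_fst)
        exact this.mul (hfm.enorm.comp measurable_snd)
      rw [e]
      calc ‖∫ y, avgKer n x y * (T f x - T f y) ∂μ01‖ₑ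
          ≤ ∫⁻ y, ‖avgKer n x y * (T f x - T f y)‖ₑ ∂μ01 := enorm_integral_le_lintegral_enorm _
        _ ≤ ∫⁻ y, ∫⁻ t, ‖avgKer n x y‖ₑ * ‖K x t - K y t‖ₑ * ‖f t‖ₑ ∂μ01 ∂μ01 := by
          refine lintegral_mono_ae ?_
          filter_upwards [hint, hT f] with y hy hy2
          rw [h3, hy2, ← integral_sub h4 hy, enorm_mul]
          simp_rw [mul_assoc]
          rw [lintegral_const_mul']
          · gcongr
            refine (enorm_integral_le_lintegral_enorm _).trans_eq ?_
            simp_rw [← sub_mul, enorm_mul]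
          · exact enorm_ne_top
        _ = ∫⁻ t, ∫⁻ y, ‖avgKer n x y‖ₑ * ‖K x t - K y t‖ₑ * ‖f t‖ₑ ∂μ01 ∂μ01 :=
          lintegral_lintegral_swap hm3.aemeasurable
        _ = ∫⁻ t, oscKer n K x t * ‖f t‖ₑ ∂μ01 := by
          refine lintegral_congr fun t => ?_
          rw [lintegral_mul_const' _ _ enorm_ne_top]
          rfl
    have hle := schur_norm_le (p := p) (measurable_oscKer n hK) hn' hfm hdom
    change ‖T f - P (T f)‖ ≤ _
    rw [Lp.norm_def, Lp.norm_def, ← ENNReal.toReal_ofReal (half_pos hε).le,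
      ← ENNReal.toReal_mul]
    exact ENNReal.toReal_mono (ENNReal.mul_lt_top ENNReal.ofReal_lt_top (Lp.memLp f).2).ne hle
  rwa [isClosed_setOfPred_isCompactOperator.closure_eq] at hcl

end Compact

/-! ### Absence of nonzero eigenvalues -/

/-- The part of a kernel living on the diagonal block `(a, a+δ]²`. -/
def blockKer (K : ℝ → ℝ → ℂ) (a δ x t : ℝ) : ℝ≥0∞ :=
  (Ioc a (a + δ) ×ˢ Ioc a (a + δ)).indicator (fun q => ‖K q.1 q.2‖ₑ) (x, t)

theorem measurable_blockKer {K : ℝ → ℝ → ℂ} (hK : Measurable (Function.uncurry K)) (a δ : ℝ) :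
    Measurable (Function.uncurry (blockKer K a δ)) :=
  Measurable.indicator (f := fun q : ℝ × ℝ => ‖K q.1 q.2‖ₑ) hK.enorm
    (measurableSet_Ioc.prod measurableSet_Ioc)

theorem blockKer_le {K G : ℝ → ℝ → ℂ} {M : ℝ} (hM : ∀ x t, ‖G x t‖ ≤ M) (a δ x t : ℝ) :
    blockKer K a δ x t ≤ ‖K x t - G x t‖ₑ
        + (Ioc a (a + δ)).indicator (fun _ => ENNReal.ofReal M) x ∧
    blockKer K a δ x t ≤ ‖K x t - G x t‖ₑ
        + (Ioc a (a + δ)).indicator (fun _ => ENNReal.ofReal M) t := by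
  unfold blockKer
  by_cases h : (x, t) ∈ Ioc a (a + δ) ×ˢ Ioc a (a + δ)
  · rw [indicator_of_mem h, indicator_of_mem h.1, indicator_of_mem h.2]
    have : ‖K x t‖ₑ ≤ ‖K x t - G x t‖ₑ + ENNReal.ofReal M := by
      have h2 := enorm_sub_le_add_mid (K x t) (G x t) 0
      rw [sub_zero, sub_zero] at h2
      refine h2.trans ?_
      gcongr
      rw [← ofReal_norm]
      exact ENNReal.ofReal_le_ofReal (hM x t)
    exact ⟨this, this⟩
  · rw [indicator_of_notMem h]
    exact ⟨zero_le, zero_le⟩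

/-- Small diagonal blocks of the kernel have small Schur bounds. -/
theorem exists_block_schur {N : ℝ → ℝ → ℂ} (h1 : MemX10 N) (hinf : MemXinf0 N) {ε : ℝ}
    (hε : 0 < ε) : ∃ δ : ℝ, 0 < δ ∧ ∀ a : ℝ,
      SchurLE μ01 (blockKer (triExt N) a δ) (ENNReal.ofReal ε) := by
  have hε2 : 0 < ε / 2 := by positivity
  obtain ⟨G, hG, hGa⟩ := h1.exists_approx hε2
  obtain ⟨H, hH, hHa⟩ := hinf.exists_approx hε2
  obtain ⟨M₁, hM₁, hGM⟩ := triExt_bounded hG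
  obtain ⟨M₂, hM₂, hHM⟩ := triExt_bounded hH
  have hK := triExt_measurable h1.1
  have hGm := triExt_measurable_of_continuousOn hG
  have hHm := triExt_measurable_of_continuousOn hH
  have hden : 0 < M₁ + M₂ + 1 := by positivity
  set δ := ε / 2 / (M₁ + M₂ + 1) with hδ
  have hδ0 : 0 < δ := by positivity
  have hδe : δ * (M₁ + M₂ + 1) = ε / 2 := div_mul_cancel₀ _ hden.ne'
  have hsum : ∀ M : ℝ, 0 ≤ M → M ≤ M₁ + M₂ + 1 → ENNReal.ofReal (ε / 2)
      + (0 + ENNReal.ofReal M * ENNReal.ofReal δ) ≤ ENNReal.ofReal ε := by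
    intro M hM hM'
    rw [zero_add, ← ENNReal.ofReal_mul hM, ← ENNReal.ofReal_add hε2.le (by positivity)]
    refine ENNReal.ofReal_le_ofReal ?_
    have := mul_le_mul_of_nonneg_left hM' hδ0.le
    linarith
  refine ⟨δ, hδ0, fun a => ⟨?_, ?_⟩⟩
  · filter_upwards [hHa] with x hx
    have hm : Measurable fun t => ‖triExt N x t - triExt H x t‖ₑ :=
      ((hK.comp measurable_prodMk_left).sub (hHm.comp measurable_prodMk_left)).enorm
    refine (lintegral_mono fun t => (blockKer_le hHM a δ x t).2).trans ?_
    rw [lintegral_add_left hm]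
    refine (add_le_add hx ?_).trans (hsum M₂ hM₂ (by linarith))
    simpa using lintegral_strip_le (J := Ioc a (a + δ)) measurableSet_Ioc
      (d := ENNReal.ofReal δ) (by simp) 0 (ENNReal.ofReal M₂)
  · filter_upwards [hGa] with t ht
    have hm : Measurable fun x => ‖triExt N x t - triExt G x t‖ₑ :=
      ((hK.comp measurable_prodMk_right).sub (hGm.comp measurable_prodMk_right)).enorm
    refine (lintegral_mono fun x => (blockKer_le hGM a δ x t).1).trans ?_
    rw [lintegral_add_left hm]
    refine (add_le_add ht ?_).trans (hsum M₁ hM₁ (by linarith))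
    simpa using lintegral_strip_le (J := Ioc a (a + δ)) measurableSet_Ioc
      (d := ENNReal.ofReal δ) (by simp) 0 (ENNReal.ofReal M₁)

/-- A triangular kernel with small diagonal blocks has no nonzero eigenvalue: an eigenfunction
vanishes successively on `[0, δ]`, `[0, 2δ]`, and so on. -/
theorem eigen_eq_zero {p : ℝ≥0∞} [hp : Fact (1 ≤ p)] {K : ℝ → ℝ → ℂ}
    (hK : Measurable (Function.uncurry K)) (htri : ∀ x t, x < t → K x t = 0)
    (hblock : ∀ ε : ℝ, 0 < ε → ∃ δ : ℝ, 0 < δ ∧ ∀ a : ℝ,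
      SchurLE μ01 (blockKer K a δ) (ENNReal.ofReal ε))
    {l : ℂ} (hl : l ≠ 0) {f : Lp ℂ p μ01}
    (hf : ∀ᵐ x ∂μ01, l * f x = ∫ t, K x t * f t ∂μ01) : f = 0 := by
  have hfm : Measurable f := (Lp.stronglyMeasurable f).measurable
  have hl' : 0 < ‖l‖ := norm_pos_iff.2 hl
  obtain ⟨δ, hδ, hb⟩ := hblock (‖l‖ / 2) (by positivity)
  have step : ∀ a : ℝ, (∀ᵐ x ∂μ01, x ≤ a → f x = 0) → ∀ᵐ x ∂μ01, x ≤ a + δ → f x = 0 := by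
    intro a ha
    set J := Ioc a (a + δ) with hJ
    set g : ℝ → ℂ := J.indicator f with hg
    have hgm : Measurable g := hfm.indicator measurableSet_Ioc
    have hgp : MemLp g p μ01 := (Lp.memLp f).indicator measurableSet_Ioc
    have hdom : ∀ᵐ x ∂μ01, ‖(l • g) x‖ₑ ≤ ∫⁻ t, blockKer K a δ x t * ‖g t‖ₑ ∂μ01 := by
      filter_upwards [hf] with x hx
      by_cases hxJ : x ∈ J
      · rw [Pi.smul_apply, smul_eq_mul, hg, indicator_of_mem hxJ, hx]
        refine (enorm_integral_le_lintegral_enorm _).trans (lintegral_mono_ae ?_)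
        filter_upwards [ha] with t ht
        rcases le_or_gt t a with h | h
        · simp [ht h]
        rcases le_or_gt t (a + δ) with h' | h'
        · have htJ : t ∈ J := ⟨h, h'⟩
          rw [indicator_of_mem htJ, enorm_mul, blockKer,
            indicator_of_mem (show (x, t) ∈ J ×ˢ J from ⟨hxJ, htJ⟩)]
        · simp [htri x t (hxJ.2.trans_lt h')]
      · rw [Pi.smul_apply, hg, indicator_of_notMem hxJ]
        simp
    have hle := schur_norm_le (p := p) (measurable_blockKer hK a δ) (hb a) hgm hdom
    rw [eLpNorm_const_smul, ← ofReal_norm] at hle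
    have hz : eLpNorm g p μ01 = 0 := by
      by_contra hne
      have := (ENNReal.mul_le_mul_iff_left hne hgp.2.ne).1 hle
      rw [ENNReal.ofReal_le_ofReal_iff (by positivity)] at this
      linarith
    have hp0 : p ≠ 0 := (lt_of_lt_of_le one_pos hp.out).ne'
    rw [eLpNorm_eq_zero_iff hgm.aestronglyMeasurable hp0] at hz
    filter_upwards [hz, ha] with x hx hxa hxd
    rcases le_or_gt x a with h | h
    · exact hxa h
    · rw [hg, indicator_of_mem (show x ∈ J from ⟨h, hxd⟩)] at hx
      exact hx
  have all : ∀ n : ℕ, ∀ᵐ x ∂μ01, x ≤ n * δ → f x = 0 := by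
    intro n
    induction n with
    | zero =>
      filter_upwards [ae_μ01_mem, ae_μ01_ne 0] with x hx h0 hle
      simp only [Nat.cast_zero, zero_mul] at hle
      exact absurd (le_antisymm hle hx.1) h0
    | succ n ih =>
      filter_upwards [step _ ih] with x hx hle
      refine hx ?_
      push_cast at hle
      linarith
  obtain ⟨n, hn⟩ := exists_nat_gt (1 / δ)
  rw [div_lt_iff₀ hδ] at hn
  refine (Lp.eq_zero_iff_ae_eq_zero).2 ?_
  filter_upwards [all n, ae_μ01_mem] with x hx hx1
  exact hx (hx1.2.trans hn.le)

/-! ### The Volterra property -/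

theorem nontrivial_Lp (p : ℝ≥0∞) [Fact (1 ≤ p)] : Nontrivial (Lp ℂ p μ01) := by
  have hm : MemLp (fun _ : ℝ => (1:ℂ)) p μ01 := memLp_const 1
  refine ⟨⟨hm.toLp _, 0, fun h => ?_⟩⟩
  rw [Lp.eq_zero_iff_ae_eq_zero] at h
  have h2 : ∀ᵐ x ∂μ01, False := by
    filter_upwards [h, hm.coeFn_toLp] with x hx hx'
    rw [hx'] at hx
    simp at hx
  have h3 : μ01 = 0 := by simpa using h2
  have h4 := μ01_univ
  rw [h3] at h4
  simp at h4

/-- If the kernel `N ∈ X_{1,0}(Ω) ∩ X_{∞,0}(Ω)`, then for every `p ∈ [1,∞]`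
the integral operator `f ↦ ∫₀ˣ N(x,t) f(t) dt` is a Volterra operator on `L^p[0,1]`:
a compact operator with spectrum `{0}`. -/
theorem riesz_dirac_stmt6 (N : ℝ → ℝ → ℂ) (h1 : MemX10 N) (hinf : MemXinf0 N) :
    ∀ (p : ℝ≥0∞) [Fact (1 ≤ p)],
      ∃ T : Lp ℂ p μ01 →L[ℂ] Lp ℂ p μ01,
        (∀ f : Lp ℂ p μ01, (T f : ℝ → ℂ) =ᵐ[μ01]
            fun x => ∫ t in Set.Icc (0:ℝ) x, N x t * (f : ℝ → ℂ) t) ∧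
        IsCompactOperator (⇑T) ∧ spectrum ℂ T = {0} := by
  intro p hp
  have hK := triExt_measurable h1.1
  have hC : max (normX1 N) (normXinf N) ≠ ⊤ := (max_lt h1.2.1 hinf.2.1).ne
  have hS : SchurLE μ01 (fun x t => ‖triExt N x t‖ₑ) (max (normX1 N) (normXinf N)) :=
    ⟨(row_le_normXinf N).mono fun x hx => hx.trans (le_max_right _ _),
      (col_le_normX1 N).mono fun t ht => ht.trans (le_max_left _ _)⟩
  obtain ⟨T, hT⟩ := exists_schur_op (p := p) hK hC hS
  have hcpt : IsCompactOperator T :=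
    compact_of_osc hK hC hS (fun ε hε => exists_oscKer_schur h1 hinf hε) hT
  have hsub : spectrum ℂ T ⊆ {0} := by
    intro l hl
    by_contra hl0
    have hl0' : l ≠ 0 := hl0
    obtain ⟨f, hf⟩ := ((hcpt.hasEigenvalue_iff_mem_spectrum hl0').2 hl).exists_hasEigenvector
    refine hf.2 (eigen_eq_zero hK (fun x t h => triExt_of_lt h)
      (fun ε hε => exists_block_schur h1 hinf hε) hl0' ?_)
    have hfe : T f = l • f := hf.apply_eq_smul
    have hTf := hT f
    rw [hfe] at hTf
    filter_upwards [hTf, Lp.coeFn_smul l f] with x hx hx'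
    rw [← hx, hx', Pi.smul_apply, smul_eq_mul]
  refine ⟨T, fun f => ?_, hcpt, ?_⟩
  · filter_upwards [hT f, ae_μ01_mem] with x hx hx1
    rw [hx]
    have e : ∀ t, triExt N x t * f t = (Icc 0 x).indicator (fun t => N x t * f t) t := by
      intro t
      rw [triExt_row N hx1]
      by_cases ht : t ∈ Icc 0 x <;> simp [ht]
    simp_rw [e]
    rw [integral_indicator measurableSet_Icc,
      μ01_restrict measurableSet_Icc (Icc_subset_Icc_right hx1.2)]
  · have := nontrivial_Lp p
    exact (spectrum.nonempty T).subset_singleton_iff.1 hsub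
end
end

section
/- Let b₁ < 0 < b₂, B = diag(b₁,b₂), and Q(x) = [[0,Q₁₂(x)],[Q₂₁(x),0]] with Q₁₂, Q₂₁ ∈ L¹[0,1]. Let Φ(·,λ) = (φ_{jk}(·,λ))_{j,k=1}² be the fundamental matrix solution of −i B⁻¹ y′ + Q(x) y = λ y with Φ(0,λ) = I₂. Then for every h > 0 and every ε > 0 there exists M > 0 such that for all λ with |λ| > M, |Im λ| ≤ h, all x ∈ [0,1], and all j,k ∈ {1,2}: |φ_{jk}(x,λ) − δ_{jk} e^{i b_k λ x}| < ε, where δ_{jk} is the Kronecker delta. -/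
/-!
After the gauge transformation `u_j = e^{-i b_j λ x} y_j` the system becomes `u₁' = P u₂`,
`u₂' = R u₁`, where `P = -i b₁ Q₁₂ e^{i(b₂-b₁)λx}` and `R = -i b₂ Q₂₁ e^{i(b₁-b₂)λx}`. In the
strip `|Im λ| ≤ h` these are bounded in `L¹` uniformly in `λ`, and by the Riemann–Lebesgue lemma
(`riemann_lebesgue_strip`) their primitives tend to `0` as `λ → ∞`, uniformly in `x`.

Integrating by parts in `u₁(x) - u₁(0) = ∫₀ˣ P u₂` moves the primitive of `P` in front
(`norm_integral_mul_le`), so the increment of `u` is at most `o(1) · max (‖u₁‖, ‖u₂‖)`. Once the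
`o(1)` factor is below `1/2`, the maximum is at most `2` by absorption, and hence `u` stays within
`o(1)` of its initial value (`system_estimate`). The exponentials `e^{i b_j λ x}` are bounded in
the strip, so the same holds after the gauge transformation is undone (`solution_asymptotics`).

Integration by parts for `W^{1,1}` functions rests on the product rule `IsPrim.mul`.
-/

open MeasureTheory Set Complex Filter ComplexConjugate
open scoped ENNReal NNReal

noncomputable section

/-- `y` is a `W^{1,1}` solution on `[0,1]` of the Dirac type system
`-i B⁻¹ y' + Q(x) y = λ y`, with `B = diag(b₁,b₂)` and `Q = [[0,Q₁₂],[Q₂₁,0]]`. -/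
def IsSol (b₁ b₂ : ℝ) (Q₁₂ Q₂₁ : ℝ → ℂ) (l : ℂ) (y : ℝ → Fin 2 → ℂ) : Prop :=
  ∃ g : ℝ → Fin 2 → ℂ,
    (∀ i, IntegrableOn (fun t => g t i) (Set.Icc (0:ℝ) 1)) ∧
    (∀ x ∈ Set.Icc (0:ℝ) 1, ∀ i, y x i = y 0 i + ∫ t in (0:ℝ)..x, g t i) ∧
    (∀ᵐ x ∂μ01,
      -Complex.I * ((b₁:ℂ))⁻¹ * g x 0 + Q₁₂ x * y x 1 = l * y x 0 ∧
      -Complex.I * ((b₂:ℂ))⁻¹ * g x 1 + Q₂₁ x * y x 0 = l * y x 1)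

/-- `Φ` is the fundamental matrix solution of `-i B⁻¹ Y' + Q Y = λ Y`, `Φ(0,λ) = I₂`;
`Φ l x j k` is the entry `φ_{jk}(x,λ)` and the `k`-th column solves the system. -/
def IsFundSol (b₁ b₂ : ℝ) (Q₁₂ Q₂₁ : ℝ → ℂ) (Φ : ℂ → ℝ → Fin 2 → Fin 2 → ℂ) : Prop :=
  ∀ l : ℂ, (∀ j k : Fin 2, Φ l 0 j k = if j = k then 1 else 0) ∧
    ∀ k : Fin 2, IsSol b₁ b₂ Q₁₂ Q₂₁ l (fun x j => Φ l x j k)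

/-! ### Calculus in `W^{1,1}[0,1]` -/

/-- `F` is a primitive on `[0,1]` of the integrable function `f`, i.e. `F ∈ W^{1,1}[0,1]` with
`F' = f` almost everywhere. -/
def IsPrim (F f : ℝ → ℂ) : Prop :=
  IntegrableOn f (Icc (0:ℝ) 1) ∧ ∀ x ∈ Icc (0:ℝ) 1, F x = F 0 + ∫ t in (0:ℝ)..x, f t

lemma intervalIntegrable_of_integrableOn {f : ℝ → ℂ} (hf : IntegrableOn f (Icc (0:ℝ) 1))
    {x : ℝ} (hx : x ∈ Icc (0:ℝ) 1) : IntervalIntegrable f volume 0 x := by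
  rw [intervalIntegrable_iff_integrableOn_Icc_of_le hx.1]
  exact hf.mono_set (Icc_subset_Icc_right hx.2)

lemma norm_intervalIntegral_le {f : ℝ → ℂ} (hf : IntegrableOn f (Icc (0:ℝ) 1))
    {x : ℝ} (hx : x ∈ Icc (0:ℝ) 1) :
    ‖∫ t in (0:ℝ)..x, f t‖ ≤ ∫ t in Icc (0:ℝ) 1, ‖f t‖ := by
  refine (intervalIntegral.norm_integral_le_integral_norm hx.1).trans ?_
  rw [intervalIntegral.integral_of_le hx.1]
  refine setIntegral_mono_set hf.norm (ae_of_all _ fun _ => norm_nonneg _) ?_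
  exact (Ioc_subset_Icc_self.trans (Icc_subset_Icc_right hx.2)).eventuallyLE

lemma absolutelyContinuous_const (c : ℂ) (a b : ℝ) :
    AbsolutelyContinuousOnInterval (fun _ : ℝ => c) a b :=
  (contDiffOn_const (n := 1)).absolutelyContinuousOnInterval

/-- The complex-valued version of the absolute continuity of the indefinite integral, obtained
from the real-valued one by splitting into real and imaginary parts. -/
lemma absolutelyContinuous_integral {f : ℝ → ℂ} (hf : Integrable f) :
    AbsolutelyContinuousOnInterval (fun x => ∫ t in (0:ℝ)..x, f t) 0 1 := by
  have h1 := ((hf.re.intervalIntegrable (a := 0)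
    (b := 1)).absolutelyContinuousOnInterval_intervalIntegral
    (c := 0) (by simp)).fun_smul (absolutelyContinuous_const 1 0 1)
  have h2 := ((hf.im.intervalIntegrable (a := 0)
    (b := 1)).absolutelyContinuousOnInterval_intervalIntegral
    (c := 0) (by simp)).fun_smul (absolutelyContinuous_const I 0 1)
  refine (congrArg (fun k => AbsolutelyContinuousOnInterval k 0 1) ?_).mpr (h1.fun_add h2)
  funext x
  have e1 := reCLM.intervalIntegral_comp_comm (hf.intervalIntegrable (a := 0) (b := x))
  have e2 := imCLM.intervalIntegral_comp_comm (hf.intervalIntegrable (a := 0) (b := x))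
  simp only [reCLM_apply, imCLM_apply] at e1 e2
  simp only [RCLike.re_to_complex, RCLike.im_to_complex, e1, e2]
  simp [Complex.re_add_im]

lemma IsPrim.continuousOn {F f : ℝ → ℂ} (hF : IsPrim F f) : ContinuousOn F (Icc (0:ℝ) 1) := by
  have h := intervalIntegral.continuousOn_primitive_interval (μ := volume) (f := f)
    (a := 0) (b := 1) (by rw [uIcc_of_le zero_le_one]; exact hF.1)
  rw [uIcc_of_le zero_le_one] at h
  exact (continuousOn_const.add h).congr hF.2

lemma IsPrim.integrableOn_mul {F f g : ℝ → ℂ} (hF : IsPrim F f)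
    (hg : IntegrableOn g (Icc (0:ℝ) 1)) : IntegrableOn (fun x => F x * g x) (Icc (0:ℝ) 1) :=
  hg.continuousOn_mul hF.continuousOn isCompact_Icc

/-- The product rule in `W^{1,1}[0,1]`: the difference between the product and the candidate
primitive is absolutely continuous with almost everywhere vanishing derivative. -/
lemma IsPrim.mul {F f G g : ℝ → ℂ} (hF : IsPrim F f) (hG : IsPrim G g) :
    IsPrim (fun x => F x * G x) (fun x => f x * G x + F x * g x) := by
  have hint : IntegrableOn (fun x => f x * G x + F x * g x) (Icc (0:ℝ) 1) := by
    refine IntegrableOn.add ?_ (hF.integrableOn_mul hG.1)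
    simpa only [mul_comm] using hG.integrableOn_mul hF.1
  refine ⟨hint, ?_⟩
  have ind : ∀ k : ℝ → ℂ, ∀ x ∈ Icc (0:ℝ) 1,
      (∫ t in (0:ℝ)..x, (Icc (0:ℝ) 1).indicator k t) = ∫ t in (0:ℝ)..x, k t := by
    intro k x hx
    refine intervalIntegral.integral_congr fun t ht => ?_
    rw [uIcc_of_le hx.1] at ht
    exact indicator_of_mem (Icc_subset_Icc_right hx.2 ht) _
  -- Extending the densities by zero makes them integrable on the whole line.
  have hf' := hF.1.integrable_indicator measurableSet_Icc
  have hg' := hG.1.integrable_indicator measurableSet_Icc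
  have hk' := hint.integrable_indicator measurableSet_Icc
  have aF := (absolutelyContinuous_const (F 0) 0 1).fun_add (absolutelyContinuous_integral hf')
  have aG := (absolutelyContinuous_const (G 0) 0 1).fun_add (absolutelyContinuous_integral hg')
  have aH := (aF.fun_smul aG).fun_sub (absolutelyContinuous_integral hk')
  obtain ⟨C, hC⟩ := aH.const_of_ae_hasDerivAt_zero (by
    filter_upwards [LocallyIntegrable.ae_hasDerivAt_integral hf'.locallyIntegrable,
      LocallyIntegrable.ae_hasDerivAt_integral hg'.locallyIntegrable,
      LocallyIntegrable.ae_hasDerivAt_integral hk'.locallyIntegrable] with x h1 h2 h3 hx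
    rw [uIcc_of_le zero_le_one] at hx
    have d := (((h1 0).const_add (F 0)).mul ((h2 0).const_add (G 0))).sub (h3 0)
    refine d.congr_deriv ?_
    rw [ind f x hx, ind g x hx, ← hF.2 x hx, ← hG.2 x hx]
    simp only [indicator_of_mem hx]
    ring)
  rw [uIcc_of_le zero_le_one] at hC
  intro x hx
  have e0 := hC 0 (left_mem_Icc.2 zero_le_one)
  have e1 := hC x hx
  simp only [smul_eq_mul, add_zero, sub_zero,
    intervalIntegral.integral_same] at e0 e1
  rw [ind _ x hx, ind _ x hx, ind _ x hx, ← hF.2 x hx, ← hG.2 x hx] at e1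
  linear_combination e1 - e0

lemma IsPrim.of_hasDerivAt {F f : ℝ → ℂ} (hF : ∀ x, HasDerivAt F (f x) x) (hf : Continuous f) :
    IsPrim F f := by
  refine ⟨hf.integrableOn_Icc, fun x _ => ?_⟩
  rw [intervalIntegral.integral_eq_sub_of_hasDerivAt (fun t _ => hF t)
    (hf.intervalIntegrable _ _)]
  ring

lemma IsPrim.congr {F f g : ℝ → ℂ} (hF : IsPrim F f)
    (hfg : ∀ᵐ x ∂volume.restrict (Icc (0:ℝ) 1), f x = g x) : IsPrim F g := by
  refine ⟨hF.1.congr hfg, fun x hx => ?_⟩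
  rw [hF.2 x hx]
  congr 1
  refine intervalIntegral.integral_congr_ae ?_
  have := (ae_restrict_iff' measurableSet_Icc).1 hfg
  filter_upwards [this] with t ht htx
  rw [uIoc_of_le hx.1] at htx
  exact ht ⟨htx.1.le, htx.2.trans hx.2⟩

/-! ### Systems with oscillating coefficients -/

/-- Integration by parts bound: an oscillating factor `P` with small primitive, integrated
against a `W^{1,1}` function `v`, gives a small result. -/
lemma norm_integral_mul_le {P v w : ℝ → ℂ} {δ m W : ℝ} (hP : IntegrableOn P (Icc (0:ℝ) 1))
    (hv : IsPrim v w) (hδ : ∀ x ∈ Icc (0:ℝ) 1, ‖∫ t in (0:ℝ)..x, P t‖ ≤ δ)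
    (hm : ∀ x ∈ Icc (0:ℝ) 1, ‖v x‖ ≤ m) (hW : ∫ t in Icc (0:ℝ) 1, ‖w t‖ ≤ W)
    {x : ℝ} (hx : x ∈ Icc (0:ℝ) 1) :
    ‖∫ t in (0:ℝ)..x, P t * v t‖ ≤ δ * (m + W) := by
  have hF : IsPrim (fun x => ∫ t in (0:ℝ)..x, P t) P := ⟨hP, fun x _ => by simp⟩
  have hPv : IntegrableOn (fun t => P t * v t) (Icc (0:ℝ) 1) := by
    simpa only [mul_comm] using hv.integrableOn_mul hP
  have hFw := hF.integrableOn_mul hv.1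
  have hδ0 : 0 ≤ δ := (norm_nonneg _).trans (hδ x hx)
  have e := (hF.mul hv).2 x hx
  rw [intervalIntegral.integral_add (intervalIntegrable_of_integrableOn hPv hx)
    (intervalIntegrable_of_integrableOn hFw hx)] at e
  simp only [intervalIntegral.integral_same, zero_mul, zero_add] at e
  rw [eq_sub_of_add_eq e.symm]
  have b1 : ‖(∫ t in (0:ℝ)..x, P t) * v x‖ ≤ δ * m := by
    rw [norm_mul]
    exact mul_le_mul (hδ x hx) (hm x hx) (norm_nonneg _) hδ0
  have b2 : ‖∫ s in (0:ℝ)..x, (∫ t in (0:ℝ)..s, P t) * w s‖ ≤ δ * W := by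
    refine (norm_intervalIntegral_le hFw hx).trans ?_
    refine le_trans ?_ (mul_le_mul_of_nonneg_left hW hδ0)
    rw [← integral_const_mul]
    refine setIntegral_mono_on hFw.norm (hv.1.norm.const_mul δ) measurableSet_Icc
      fun s hs => ?_
    rw [norm_mul]
    exact mul_le_mul_of_nonneg_right (hδ s hs) (norm_nonneg _)
  calc _ ≤ _ := norm_sub_le _ _
    _ ≤ δ * m + δ * W := add_le_add b1 b2
    _ = _ := by ring

/-- Perturbation estimate for the system `u' = P v`, `v' = R u` whose coefficients are bounded in
`L¹` and have small primitives. The maximum of `‖u‖` and `‖v‖` bounds its own increment with a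
factor at most `1/2`, so it is at most `2` and no Gronwall argument is needed. -/
lemma system_estimate {P R u v : ℝ → ℂ} {δ N : ℝ}
    (hP : IntegrableOn P (Icc (0:ℝ) 1)) (hR : IntegrableOn R (Icc (0:ℝ) 1))
    (hu : IsPrim u (fun t => P t * v t)) (hv : IsPrim v (fun t => R t * u t))
    (hPδ : ∀ x ∈ Icc (0:ℝ) 1, ‖∫ t in (0:ℝ)..x, P t‖ ≤ δ)
    (hRδ : ∀ x ∈ Icc (0:ℝ) 1, ‖∫ t in (0:ℝ)..x, R t‖ ≤ δ)
    (hPN : ∫ t in Icc (0:ℝ) 1, ‖P t‖ ≤ N) (hRN : ∫ t in Icc (0:ℝ) 1, ‖R t‖ ≤ N)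
    (hu0 : ‖u 0‖ ≤ 1) (hv0 : ‖v 0‖ ≤ 1) (hs : δ * (1 + N) ≤ 1 / 2) :
    ∀ x ∈ Icc (0:ℝ) 1, ‖u x - u 0‖ ≤ 2 * (δ * (1 + N)) ∧ ‖v x - v 0‖ ≤ 2 * (δ * (1 + N)) := by
  have h0 : (0:ℝ) ∈ Icc (0:ℝ) 1 := left_mem_Icc.2 zero_le_one
  have hδ0 : 0 ≤ δ := (norm_nonneg _).trans (hPδ 0 h0)
  have hN0 : 0 ≤ N := (integral_nonneg fun _ => norm_nonneg _).trans hPN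
  obtain ⟨x₀, hx₀, hmax⟩ := isCompact_Icc.exists_isMaxOn (nonempty_Icc.2 (zero_le_one' ℝ))
    (hu.continuousOn.norm.sup hv.continuousOn.norm)
  obtain ⟨m, hm⟩ : ∃ m, m = max ‖u x₀‖ ‖v x₀‖ := ⟨_, rfl⟩
  have hmu : ∀ x ∈ Icc (0:ℝ) 1, ‖u x‖ ≤ m := fun x hx =>
    (le_max_left _ _).trans ((hmax hx).trans_eq hm.symm)
  have hmv : ∀ x ∈ Icc (0:ℝ) 1, ‖v x‖ ≤ m := fun x hx =>
    (le_max_right _ _).trans ((hmax hx).trans_eq hm.symm)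
  have hm0 : 0 ≤ m := (norm_nonneg _).trans (hmu 0 h0)
  have step : ∀ {S z w : ℝ → ℂ}, IntegrableOn S (Icc (0:ℝ) 1) →
      IsPrim z (fun t => S t * w t) → (∫ t in Icc (0:ℝ) 1, ‖S t‖ ≤ N) →
      (∀ x ∈ Icc (0:ℝ) 1, ‖w x‖ ≤ m) → ∫ t in Icc (0:ℝ) 1, ‖S t * w t‖ ≤ N * m := by
    intro S z w hS hz hSN hw
    refine le_trans ?_ (mul_le_mul_of_nonneg_right hSN hm0)
    rw [← integral_mul_const]
    refine setIntegral_mono_on hz.1.norm (hS.norm.mul_const m) measurableSet_Icc fun t ht => ?_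
    rw [norm_mul]
    exact mul_le_mul_of_nonneg_left (hw t ht) (norm_nonneg _)
  have bu : ∀ x ∈ Icc (0:ℝ) 1, ‖u x - u 0‖ ≤ δ * (1 + N) * m := fun x hx => by
    rw [hu.2 x hx, add_sub_cancel_left]
    exact (norm_integral_mul_le hP hv hPδ hmv (step hR hv hRN hmu) hx).trans_eq (by ring)
  have bv : ∀ x ∈ Icc (0:ℝ) 1, ‖v x - v 0‖ ≤ δ * (1 + N) * m := fun x hx => by
    rw [hv.2 x hx, add_sub_cancel_left]
    exact (norm_integral_mul_le hR hu hRδ hmu (step hP hu hPN hmv) hx).trans_eq (by ring)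
  have hm2 : m ≤ 2 := by
    have h1 : m ≤ 1 + δ * (1 + N) * m := by
      rw [hm]
      refine max_le ?_ ?_ <;> rw [← hm]
      · have := norm_le_norm_add_norm_sub' (u x₀) (u 0)
        linarith [bu x₀ hx₀]
      · have := norm_le_norm_add_norm_sub' (v x₀) (v 0)
        linarith [bv x₀ hx₀]
    nlinarith [mul_le_mul_of_nonneg_right hs hm0]
  have hfin : δ * (1 + N) * m ≤ 2 * (δ * (1 + N)) := by
    have : 0 ≤ δ * (1 + N) := by positivity
    nlinarith
  exact fun x hx => ⟨(bu x hx).trans hfin, (bv x hx).trans hfin⟩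

/-! ### The Riemann–Lebesgue lemma in a strip -/

lemma norm_exp_le {a h : ℝ} {l : ℂ} (hl : |l.im| ≤ h) {x : ℝ} (hx : x ∈ Icc (0:ℝ) 1) :
    ‖exp (I * (a:ℂ) * l * (x:ℂ))‖ ≤ Real.exp (|a| * h) := by
  rw [norm_exp, Real.exp_le_exp]
  have : (I * (a:ℂ) * l * (x:ℂ)).re = -(a * l.im) * x := by simp
  rw [this]
  calc -(a * l.im) * x ≤ |-(a * l.im) * x| := le_abs_self _
    _ = |a| * |l.im| * x := by rw [abs_mul, abs_neg, abs_mul, abs_of_nonneg hx.1]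
    _ ≤ |a| * |l.im| * 1 := by gcongr; exact hx.2
    _ ≤ |a| * h := by rw [mul_one]; gcongr

lemma hasDerivAt_exp_mul (c : ℂ) (x : ℝ) :
    HasDerivAt (fun t : ℝ => exp (c * (t:ℂ))) (c * exp (c * (x:ℂ))) x := by
  have h := ((ofRealCLM.hasDerivAt (x := x)).const_mul c).cexp
  simp only [ofRealCLM_apply, ofReal_one, mul_one] at h
  rwa [mul_comm]

lemma exists_smooth_approx {q : ℝ → ℂ} (hq : IntegrableOn q (Icc (0:ℝ) 1)) {η : ℝ} (hη : 0 < η) :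
    ∃ g : ℝ → ℂ, ContDiff ℝ 1 g ∧ ∫ t in Icc (0:ℝ) 1, ‖q t - g t‖ ≤ 2 * η := by
  obtain ⟨f, hfc, hfq, hf, hfi⟩ :=
    Integrable.exists_hasCompactSupport_integral_sub_le (μ := volume.restrict (Icc (0:ℝ) 1)) hq hη
  obtain ⟨g, hg, hgf⟩ :=
    (hfc.uniformContinuous_of_continuous hf).exists_contDiff_dist_le hη
  have hgi : IntegrableOn g (Icc (0:ℝ) 1) := hg.continuous.integrableOn_Icc
  refine ⟨g, hg.of_le (by exact_mod_cast le_top), ?_⟩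
  calc ∫ t in Icc (0:ℝ) 1, ‖q t - g t‖
      ≤ ∫ t in Icc (0:ℝ) 1, (‖q t - f t‖ + η) := by
        refine integral_mono (hq.sub hgi).norm ((hq.sub hfi).norm.add (integrable_const η))
          fun t => ?_
        have h1 := norm_sub_le_norm_sub_add_norm_sub (q t) (f t) (g t)
        have h2 := (hgf t).le
        rw [dist_comm, dist_eq_norm] at h2
        exact h1.trans (by gcongr)
    _ = (∫ t in Icc (0:ℝ) 1, ‖q t - f t‖) + η := by
        refine (integral_add (hq.sub hfi).norm (integrable_const η)).trans ?_
        simp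
    _ ≤ 2 * η := by linarith

/-- The Riemann–Lebesgue lemma for the Fourier integral over `[0,x]`, uniform in `x ∈ [0,1]` and
in the frequency `l` of a horizontal strip. -/
lemma riemann_lebesgue_strip {q : ℝ → ℂ} (hq : IntegrableOn q (Icc (0:ℝ) 1)) {a : ℝ} (ha : a ≠ 0)
    (h : ℝ) {δ : ℝ} (hδ : 0 < δ) :
    ∃ M : ℝ, 0 < M ∧ ∀ l : ℂ, M < ‖l‖ → |l.im| ≤ h → ∀ x ∈ Icc (0:ℝ) 1,
      ‖∫ t in (0:ℝ)..x, exp (I * (a:ℂ) * l * (t:ℂ)) * q t‖ ≤ δ := by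
  obtain ⟨K, hK⟩ : ∃ K, K = Real.exp (|a| * h) := ⟨_, rfl⟩
  have hK0 : 0 < K := hK ▸ Real.exp_pos _
  have ha0 : 0 < |a| := abs_pos.2 ha
  obtain ⟨g, hg, hgq⟩ := exists_smooth_approx hq (η := δ / (4 * K)) (by positivity)
  have hg' : Continuous (deriv g) := hg.continuous_deriv le_rfl
  have hgprim : IsPrim g (deriv g) :=
    .of_hasDerivAt (fun x => (hg.differentiable one_ne_zero x).hasDerivAt) hg'
  obtain ⟨S, hS⟩ := isCompact_Icc.exists_bound_of_continuousOn hgprim.continuousOn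
  have hS0 : 0 ≤ S := (norm_nonneg _).trans (hS 0 (left_mem_Icc.2 zero_le_one))
  obtain ⟨W, hW⟩ : ∃ W, W = ∫ t in Icc (0:ℝ) 1, ‖deriv g t‖ := ⟨_, rfl⟩
  have hW0 : 0 ≤ W := hW ▸ integral_nonneg fun _ => norm_nonneg _
  refine ⟨2 * (K + 1) * (S + W) / (|a| * δ) + 1, by positivity, fun l hl hlh x hx => ?_⟩
  have hl0 : 0 < ‖l‖ := lt_trans (by positivity) hl
  obtain ⟨c, hc⟩ : ∃ c, c = I * (a:ℂ) * l := ⟨_, rfl⟩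
  have hcn : ‖c‖ = |a| * ‖l‖ := by rw [hc]; simp
  have hc0 : c ≠ 0 := by rw [← norm_pos_iff, hcn]; positivity
  have hexp : ∀ x ∈ Icc (0:ℝ) 1, ‖exp (c * (x:ℂ))‖ ≤ K := fun x hx => by
    rw [hc, hK]; exact norm_exp_le hlh hx
  rw [← hc]
  have hEc : Continuous fun t : ℝ => exp (c * (t:ℂ)) := by fun_prop
  have hE : IsPrim (fun t : ℝ => exp (c * (t:ℂ)) / c) (fun t => exp (c * (t:ℂ))) := by
    refine .of_hasDerivAt (fun x => ?_) hEc
    have := (hasDerivAt_exp_mul c x).div_const c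
    rwa [mul_div_cancel_left₀ _ hc0] at this
  have hprim : ∀ x ∈ Icc (0:ℝ) 1, ‖∫ t in (0:ℝ)..x, exp (c * (t:ℂ))‖ ≤ (K + 1) / (|a| * ‖l‖) := by
    intro x hx
    rw [← sub_eq_of_eq_add' (hE.2 x hx), ← sub_div, norm_div, hcn]
    gcongr
    refine (norm_sub_le _ _).trans (add_le_add (hexp x hx) ?_)
    simp
  have b1 := norm_integral_mul_le hE.1 hgprim hprim hS hW.ge hx
  have b1' : (K + 1) / (|a| * ‖l‖) * (S + W) ≤ δ / 2 := by
    have h1 : 2 * (K + 1) * (S + W) / (|a| * δ) ≤ ‖l‖ := by linarith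
    rw [div_le_iff₀ (by positivity)] at h1
    rw [div_mul_eq_mul_div, div_le_iff₀ (by positivity)]
    linarith
  have hgi : IntegrableOn g (Icc (0:ℝ) 1) := hg.continuous.integrableOn_Icc
  have hqg : IntegrableOn (fun t => q t - g t) (Icc (0:ℝ) 1) := hq.sub hgi
  have hmul : ∀ k : ℝ → ℂ, IntegrableOn k (Icc (0:ℝ) 1) →
      IntegrableOn (fun t : ℝ => exp (c * (t:ℂ)) * k t) (Icc (0:ℝ) 1) := fun k hk =>
    hk.continuousOn_mul hEc.continuousOn isCompact_Icc
  have b2 : ‖∫ t in (0:ℝ)..x, exp (c * (t:ℂ)) * (q t - g t)‖ ≤ δ / 2 := by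
    refine (norm_intervalIntegral_le (hmul _ hqg) hx).trans ?_
    calc _ ≤ ∫ t in Icc (0:ℝ) 1, K * ‖q t - g t‖ := by
          refine setIntegral_mono_on (hmul _ hqg).norm (hqg.norm.const_mul K) measurableSet_Icc
            fun t ht => ?_
          rw [norm_mul]
          exact mul_le_mul_of_nonneg_right (hexp t ht) (norm_nonneg _)
      _ = K * ∫ t in Icc (0:ℝ) 1, ‖q t - g t‖ := integral_const_mul _ _
      _ ≤ K * (2 * (δ / (4 * K))) := by gcongr
      _ = δ / 2 := by field_simp; norm_num
  have e : (∫ t in (0:ℝ)..x, exp (c * (t:ℂ)) * q t) =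
      (∫ t in (0:ℝ)..x, exp (c * (t:ℂ)) * (q t - g t)) +
        ∫ t in (0:ℝ)..x, exp (c * (t:ℂ)) * g t := by
    rw [← intervalIntegral.integral_add (intervalIntegrable_of_integrableOn (hmul _ hqg) hx)
      (intervalIntegrable_of_integrableOn (hmul _ hgi) hx)]
    congr 1; funext t; ring
  rw [e]
  refine (norm_add_le _ _).trans ?_
  linarith


/-! ### Asymptotics of solutions -/

/-- The gauge transformation `y ↦ e^{-i b l x} y` removes the term `l y` from one equation of the
system, leaving only the oscillating off-diagonal coefficient. -/
lemma IsPrim.gauge {b : ℝ} (hb : b ≠ 0) (b' : ℝ) {l : ℂ} {q y z g : ℝ → ℂ} (hy : IsPrim y g)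
    (heq : ∀ᵐ x ∂volume.restrict (Icc (0:ℝ) 1), -I * (b:ℂ)⁻¹ * g x + q x * z x = l * y x) :
    IsPrim (fun x : ℝ => exp (I * ((-b : ℝ) : ℂ) * l * (x:ℂ)) * y x)
      (fun t : ℝ => exp (I * ((b' - b : ℝ) : ℂ) * l * (t:ℂ)) * (-I * (b:ℂ) * q t) *
        (exp (I * ((-b' : ℝ) : ℂ) * l * (t:ℂ)) * z t)) := by
  have hE := IsPrim.of_hasDerivAt (hasDerivAt_exp_mul (I * ((-b : ℝ) : ℂ) * l)) (by fun_prop)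
  refine (hE.mul hy).congr ?_
  filter_upwards [heq] with x hx
  have hbC : (b:ℂ) ≠ 0 := by exact_mod_cast hb
  have hg : g x = I * (b:ℂ) * (l * y x - q x * z x) := by
    rw [← hx]
    field_simp
    linear_combination g x * I_sq
  have hexp : exp (I * ((-b : ℝ) : ℂ) * l * (x:ℂ)) =
      exp (I * ((b' - b : ℝ) : ℂ) * l * (x:ℂ)) * exp (I * ((-b' : ℝ) : ℂ) * l * (x:ℂ)) := by
    rw [← exp_add]
    congr 1
    push_cast
    ring
  rw [hg, mul_mul_mul_comm, ← hexp]
  push_cast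
  ring

/-- Undoing the gauge transformation costs only the bounded factor `e^{i b l x}`. -/
lemma norm_sub_exp_le {b l : ℂ} {K : ℝ} {y : ℝ → ℂ} {x r : ℝ}
    (hK : ‖exp (I * b * l * (x:ℂ))‖ ≤ K)
    (hr : ‖exp (I * (-b) * l * (x:ℂ)) * y x - exp (I * (-b) * l * ((0:ℝ):ℂ)) * y 0‖ ≤ r) :
    ‖y x - exp (I * b * l * (x:ℂ)) * y 0‖ ≤ K * r := by
  have h1 : exp (I * b * l * (x:ℂ)) * exp (I * (-b) * l * (x:ℂ)) = 1 := by
    rw [← exp_add, ← exp_zero]; congr 1; ring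
  have h2 : y x - exp (I * b * l * (x:ℂ)) * y 0 = exp (I * b * l * (x:ℂ)) *
      (exp (I * (-b) * l * (x:ℂ)) * y x - exp (I * (-b) * l * ((0:ℝ):ℂ)) * y 0) := by
    simp only [ofReal_zero, mul_zero, exp_zero, one_mul]
    linear_combination -y x * h1
  rw [h2, norm_mul]
  exact mul_le_mul hK hr (norm_nonneg _) ((norm_nonneg _).trans hK)

lemma integrableOn_exp_mul (c : ℂ) {q : ℝ → ℂ} (hq : IntegrableOn q (Icc (0:ℝ) 1)) :
    IntegrableOn (fun t : ℝ => exp (c * (t:ℂ)) * q t) (Icc (0:ℝ) 1) :=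
  hq.continuousOn_mul (by fun_prop) isCompact_Icc

lemma integral_norm_exp_mul_le {a h K : ℝ} {l : ℂ} (hl : |l.im| ≤ h)
    (hK : Real.exp (|a| * h) ≤ K) {q : ℝ → ℂ} (hq : IntegrableOn q (Icc (0:ℝ) 1)) :
    ∫ t in Icc (0:ℝ) 1, ‖exp (I * (a:ℂ) * l * (t:ℂ)) * q t‖ ≤
      K * ∫ t in Icc (0:ℝ) 1, ‖q t‖ := by
  rw [← integral_const_mul]
  refine setIntegral_mono_on (integrableOn_exp_mul _ hq).norm (hq.norm.const_mul K)
    measurableSet_Icc fun t ht => ?_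
  rw [norm_mul]
  exact mul_le_mul_of_nonneg_right ((norm_exp_le hl ht).trans hK) (norm_nonneg _)

/-- Asymptotics of every solution with initial data in the unit polydisc; the bound applies to
both columns of the fundamental matrix at once. -/
lemma solution_asymptotics {b₁ b₂ : ℝ} (hb₁ : b₁ < 0) (hb₂ : 0 < b₂) {Q₁₂ Q₂₁ : ℝ → ℂ}
    (hQ₁₂ : IntegrableOn Q₁₂ (Icc (0:ℝ) 1)) (hQ₂₁ : IntegrableOn Q₂₁ (Icc (0:ℝ) 1))
    {h : ℝ} (hh : 0 < h) {ε : ℝ} (hε : 0 < ε) :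
    ∃ M : ℝ, 0 < M ∧ ∀ l : ℂ, M < ‖l‖ → |l.im| ≤ h → ∀ y : ℝ → Fin 2 → ℂ,
      IsSol b₁ b₂ Q₁₂ Q₂₁ l y → ‖y 0 0‖ ≤ 1 → ‖y 0 1‖ ≤ 1 → ∀ x ∈ Icc (0:ℝ) 1, ∀ j : Fin 2,
        ‖y x j - exp (I * ((![b₁, b₂] j : ℝ) : ℂ) * l * (x:ℂ)) * y 0 j‖ < ε := by
  obtain ⟨K, hK⟩ : ∃ K, K = Real.exp ((|b₁| + |b₂|) * h) := ⟨_, rfl⟩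
  have hK0 : 0 < K := hK ▸ Real.exp_pos _
  have hKle : ∀ a : ℝ, |a| ≤ |b₁| + |b₂| → Real.exp (|a| * h) ≤ K := fun a ha => by
    rw [hK, Real.exp_le_exp]; gcongr
  have hK1 := hKle b₁ (by simp)
  have hK2 := hKle b₂ (by simp)
  have hK21 := hKle (b₂ - b₁) ((abs_sub _ _).trans_eq (add_comm _ _))
  have hK12 := hKle (b₁ - b₂) (abs_sub _ _)
  have hq₁ : IntegrableOn (fun t => -I * (b₁:ℂ) * Q₁₂ t) (Icc (0:ℝ) 1) := hQ₁₂.const_mul _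
  have hq₂ : IntegrableOn (fun t => -I * (b₂:ℂ) * Q₂₁ t) (Icc (0:ℝ) 1) := hQ₂₁.const_mul _
  obtain ⟨A₁, hA₁⟩ : ∃ A, A = ∫ t in Icc (0:ℝ) 1, ‖-I * (b₁:ℂ) * Q₁₂ t‖ := ⟨_, rfl⟩
  obtain ⟨A₂, hA₂⟩ : ∃ A, A = ∫ t in Icc (0:ℝ) 1, ‖-I * (b₂:ℂ) * Q₂₁ t‖ := ⟨_, rfl⟩
  have hA₁0 : 0 ≤ A₁ := hA₁ ▸ integral_nonneg fun _ => norm_nonneg _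
  have hA₂0 : 0 ≤ A₂ := hA₂ ▸ integral_nonneg fun _ => norm_nonneg _
  obtain ⟨N, hN⟩ : ∃ N, N = K * (A₁ + A₂) := ⟨_, rfl⟩
  have hN0 : 0 ≤ N := by rw [hN]; positivity
  obtain ⟨δ, hδ⟩ : ∃ δ, δ = min (1 / 2) (ε / (4 * K)) / (1 + N) := ⟨_, rfl⟩
  have hδ0 : 0 < δ := by rw [hδ]; positivity
  have hδN : δ * (1 + N) = min (1 / 2) (ε / (4 * K)) := by rw [hδ]; field_simp
  obtain ⟨M₁, hM₁, hRL₁⟩ := riemann_lebesgue_strip hq₁ (a := b₂ - b₁) (by linarith) h hδ0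
  obtain ⟨M₂, hM₂, hRL₂⟩ := riemann_lebesgue_strip hq₂ (a := b₁ - b₂) (by linarith) h hδ0
  refine ⟨max M₁ M₂, lt_max_of_lt_left hM₁, fun l hl hlh y ⟨g, hg, hyg, heq⟩ hy0 hy1 x hx => ?_⟩
  have hu := IsPrim.gauge hb₁.ne b₂ (z := fun x => y x 1) (q := Q₁₂)
    ⟨hg 0, fun x hx => hyg x hx 0⟩ (heq.mono fun _ h => h.1)
  have hv := IsPrim.gauge hb₂.ne' b₁ (z := fun x => y x 0) (q := Q₂₁)
    ⟨hg 1, fun x hx => hyg x hx 1⟩ (heq.mono fun _ h => h.2)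
  have est := system_estimate (integrableOn_exp_mul _ hq₁) (integrableOn_exp_mul _ hq₂) hu hv
    (hRL₁ l ((le_max_left _ _).trans_lt hl) hlh) (hRL₂ l ((le_max_right _ _).trans_lt hl) hlh)
    (N := N)
    ((integral_norm_exp_mul_le hlh hK21 hq₁).trans (by
      rw [← hA₁, hN]; gcongr; linarith))
    ((integral_norm_exp_mul_le hlh hK12 hq₂).trans (by
      rw [← hA₂, hN]; gcongr; linarith))
    (by simpa using hy0) (by simpa using hy1) (hδN ▸ min_le_left _ _) x hx
  have hfin : K * (2 * (δ * (1 + N))) < ε := by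
    have h1 : δ * (1 + N) ≤ ε / (4 * K) := hδN ▸ min_le_right _ _
    calc K * (2 * (δ * (1 + N))) ≤ K * (2 * (ε / (4 * K))) := by gcongr
      _ = ε / 2 := by field_simp; norm_num
      _ < ε := half_lt_self hε
  simp only [ofReal_neg] at est
  intro j
  fin_cases j
  · exact (norm_sub_exp_le (y := fun x => y x 0) ((norm_exp_le hlh hx).trans hK1)
      est.1).trans_lt hfin
  · exact (norm_sub_exp_le (y := fun x => y x 1) ((norm_exp_le hlh hx).trans hK2)
      est.2).trans_lt hfin

/-- Uniform asymptotics of the fundamental matrix solution in a strip: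
`φ_{jk}(x,λ) = δ_{jk} e^{i b_k λ x} + o(1)` as `λ → ∞`, `|Im λ| ≤ h`, uniformly in `x`. -/
theorem riesz_dirac_stmt11 (b₁ b₂ : ℝ) (hb₁ : b₁ < 0) (hb₂ : 0 < b₂)
    (Q₁₂ Q₂₁ : ℝ → ℂ)
    (hQ₁₂ : IntegrableOn Q₁₂ (Set.Icc (0:ℝ) 1))
    (hQ₂₁ : IntegrableOn Q₂₁ (Set.Icc (0:ℝ) 1))
    (Φ : ℂ → ℝ → Fin 2 → Fin 2 → ℂ)
    (hΦ : IsFundSol b₁ b₂ Q₁₂ Q₂₁ Φ)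
    (h : ℝ) (hh : 0 < h) :
    ∀ ε : ℝ, 0 < ε → ∃ M : ℝ, 0 < M ∧ ∀ l : ℂ, M < ‖l‖ → |l.im| ≤ h →
      ∀ x ∈ Set.Icc (0:ℝ) 1, ∀ j k : Fin 2,
        ‖Φ l x j k - (if j = k then
            Complex.exp (Complex.I * ((![b₁, b₂] k : ℝ) : ℂ) * l * (x:ℂ)) else 0)‖ < ε := by
  intro ε hε
  obtain ⟨M, hM, H⟩ := solution_asymptotics hb₁ hb₂ hQ₁₂ hQ₂₁ hh hε
  refine ⟨M, hM, fun l hl hlh x hx j k => ?_⟩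
  obtain ⟨hinit, hsol⟩ := hΦ l
  have hle : ∀ i, ‖Φ l 0 i k‖ ≤ 1 := fun i => by
    rw [hinit]; split_ifs <;> simp
  have key := H l hl hlh _ (hsol k) (hle 0) (hle 1) x hx j
  simp only [hinit] at key
  split_ifs at key ⊢ with hjk
  · subst hjk
    simpa only [mul_one] using key
  · simpa only [mul_zero] using key
end
end
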